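/- arXiv:1601.05770 — 5 statements merged into one kernel-verified Lean document; each statement's English description precedes it below -/
import Mathlib

section
/- Yang–Baxter equation for the higher spin six vertex weights. Let q, s, u₁, u₂ ∈ ℂ with s·u₁ ≠ 1 and s·u₂ ≠ 1, and let m, n ∈ ℤ_{≥0}. Define the two-vertex weights w^{(m,n)}_{u₁,u₂;s}(k₁,k₂;k₁',k₂') := Σ_{l≥0} w_{u₁,s}(m,k₁;l,k₁')·w_{u₂,s}(l,k₂;n,k₂') for k₁,k₂,k₁',k₂' ∈ {0,1} (at most one summand is nonzero), and the transposed weights w̃^{(m,n)}_{u₁,u₂;s}(k₁,k₂;k₁',k₂') := w^{(m,n)}_{u₁,u₂;s}(k₂,k₁;k₂',k₁'). Regard these as 4×4 complex matrices with rows indexed by (k₁,k₂) and columns by (k₁',k₂'), in the order (0,0),(0,1),(1,0),(1,1), and let X be the 4×4 matrix with rows [u₁−qu₂, 0, 0, 0], [0, q(u₁−u₂), (1−q)u₁, 0], [0, (1−q)u₂, u₁−u₂, 0], [0, 0, 0, u₁−qu₂]. Then w̃^{(m,n)}_{u₂,u₁;s} · X = X · w^{(m,n)}_{u₁,u₂;s}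 (equivalently, w̃^{(m,n)}_{u₂,u₁;s} = X · w^{(m,n)}_{u₁,u₂;s} · X^{−1} whenever X is invertible). In particular X is independent of m, n and of s. -/
noncomputable section

open Finset

/-- Vertex weights `w_{u,s}(i₁, j₁; i₂, j₂)` of the higher spin six vertex model. -/
def vw (q u s : ℂ) (i₁ j₁ i₂ j₂ : ℕ) : ℂ :=
  if j₁ = 0 ∧ j₂ = 0 ∧ i₂ = i₁ then (1 - s * q ^ i₁ * u) / (1 - s * u)
  else if j₁ = 0 ∧ j₂ = 1 ∧ i₁ = i₂ + 1 then (1 - s ^ 2 * q ^ i₂) * u / (1 - s * u)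
  else if j₁ = 1 ∧ j₂ = 1 ∧ i₂ = i₁ then (u - s * q ^ i₁) / (1 - s * u)
  else if j₁ = 1 ∧ j₂ = 0 ∧ i₂ = i₁ + 1 then (1 - q ^ (i₁ + 1)) / (1 - s * u)
  else 0

/-- Two-vertex weights `w^{(m,n)}_{u₁,u₂;s}(k₁,k₂;k₁',k₂')`, organized as a `4×4` matrix
with rows indexed by `(k₁,k₂)` and columns by `(k₁',k₂')`. -/
def twoVertex (q s u₁ u₂ : ℂ) (m n : ℕ) : Matrix (Fin 2 × Fin 2) (Fin 2 × Fin 2) ℂ :=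
  Matrix.of fun kk kk' =>
    ∑' l : ℕ, vw q u₁ s m (kk.1 : ℕ) l (kk'.1 : ℕ) * vw q u₂ s l (kk.2 : ℕ) n (kk'.2 : ℕ)

/-- Transposed two-vertex weights `w̃^{(m,n)}_{u₁,u₂;s}(k₁,k₂;k₁',k₂')
    = w^{(m,n)}_{u₁,u₂;s}(k₂,k₁;k₂',k₁')`. -/
def twoVertexT (q s u₁ u₂ : ℂ) (m n : ℕ) : Matrix (Fin 2 × Fin 2) (Fin 2 × Fin 2) ℂ :=
  Matrix.of fun kk kk' => twoVertex q s u₁ u₂ m n (kk.2, kk.1) (kk'.2, kk'.1)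

/-- The conjugating matrix `X`, with rows
`[u₁−qu₂, 0, 0, 0], [0, q(u₁−u₂), (1−q)u₁, 0], [0, (1−q)u₂, u₁−u₂, 0], [0, 0, 0, u₁−qu₂]`
in the index order `(0,0), (0,1), (1,0), (1,1)`. -/
def Xmat (q u₁ u₂ : ℂ) : Matrix (Fin 2 × Fin 2) (Fin 2 × Fin 2) ℂ :=
  Matrix.of fun p p' =>
    if p = (0, 0) ∧ p' = (0, 0) then u₁ - q * u₂
    else if p = (0, 1) ∧ p' = (0, 1) then q * (u₁ - u₂)
    else if p = (0, 1) ∧ p' = (1, 0) then (1 - q) * u₁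
    else if p = (1, 0) ∧ p' = (0, 1) then (1 - q) * u₂
    else if p = (1, 0) ∧ p' = (1, 0) then u₁ - u₂
    else if p = (1, 1) ∧ p' = (1, 1) then u₁ - q * u₂
    else 0

/-! Read along the vertical direction, the weights with their denominators cleared form an operator
`L(u) = !![1 - s u K, u E; F, u - s K]` on functions of the number of vertical arrows, where
`K = q ^ N`, while `E` and `F` shift `N`. The Yang–Baxter equation is the exchange relation
`L₂(u₂) L₁(u₁) X = X L₁(u₁) L₂(u₂)` for matrix elements. It only uses `K E = q E K`, `F K = q K F`
and `F E - q E F = (1 - q) (1 - s² K²)`, and does not see which representation of these relations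
is chosen: this is why `X` is the same for all `m` and `n`.
-/

open scoped Kronecker

section MatrixProducts

lemma kronecker_one_mul_one_kronecker_apply {α l m n p : Type*} [Semiring α] [Fintype m]
    [Fintype n] [DecidableEq m] [DecidableEq n] (L : Matrix l m α) (M : Matrix n p α)
    (a : l) (b : n) (c : m) (d : p) :
    ((L ⊗ₖ (1 : Matrix n n α)) * ((1 : Matrix m m α) ⊗ₖ M)) (a, b) (c, d) = L a c * M b d := by
  simp [Matrix.mul_apply, Fintype.sum_prod_type, Matrix.one_apply]

lemma one_kronecker_mul_kronecker_one_apply {α l m n p : Type*} [Semiring α] [Fintype l]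
    [Fintype p] [DecidableEq l] [DecidableEq p] (L : Matrix l m α) (M : Matrix n p α)
    (a : l) (b : n) (c : m) (d : p) :
    (((1 : Matrix l l α) ⊗ₖ M) * (L ⊗ₖ (1 : Matrix p p α))) (a, b) (c, d) = M b d * L a c := by
  simp [Matrix.mul_apply, Fintype.sum_prod_type, Matrix.one_apply]

variable {R A : Type*} [CommSemiring R] [Semiring A] [Algebra R A]

lemma map_mul_map_algebraMap {l m n : Type*} [Fintype m] (φ : A →ₗ[R] R)
    (M : Matrix l m A) (X : Matrix m n R) :
    (M * X.map (algebraMap R A)).map φ = M.map φ * X := by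
  ext i j
  simp [Matrix.mul_apply, Algebra.algebraMap_eq_smul_one, mul_comm]

lemma map_map_algebraMap_mul {l m n : Type*} [Fintype m] (φ : A →ₗ[R] R)
    (X : Matrix l m R) (M : Matrix m n A) :
    (X.map (algebraMap R A) * M).map φ = X * M.map φ := by
  ext i j
  simp [Matrix.mul_apply, Algebra.algebraMap_eq_smul_one]

end MatrixProducts

section ExchangeRelation

variable {R A : Type*} [CommRing R] [Ring A] [Algebra R A]

/-- The six vertex R-matrix over an arbitrary commutative ring, in the normalization of `Xmat`. -/
def rMatrix (q u₁ u₂ : R) : Matrix (Fin 2 × Fin 2) (Fin 2 × Fin 2) R :=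
  Matrix.of fun
    | (0, 0), (0, 0) => u₁ - q * u₂
    | (0, 1), (0, 1) => q * (u₁ - u₂)
    | (0, 1), (1, 0) => (1 - q) * u₁
    | (1, 0), (0, 1) => (1 - q) * u₂
    | (1, 0), (1, 0) => u₁ - u₂
    | (1, 1), (1, 1) => u₁ - q * u₂
    | _, _ => 0

/-- The quantum `sl₂`-type relations behind the higher spin six vertex model: `K` plays the role
of `q ^ N`, `E` raises the column index `N` of a function, and `F` lowers it. The form of the last
relation avoids dividing by `q`. -/
structure IsQuantumTriple (q s : R) (K E F : A) : Prop where
  mul_raise : K * E = q • (E * K)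
  lower_mul : F * K = q • (K * F)
  lower_mul_raise : F * E = q • (E * F) + (1 - q) • (1 - s ^ 2 • (K * K))

/-- The L-operator with spectral parameter `u`, indexed by the incoming and outgoing horizontal
arrows; the factor `1 / (1 - s u)` of the vertex weights is left out. -/
def lOperator (s : R) (K E F : A) (u : R) : Matrix (Fin 2) (Fin 2) A :=
  !![1 - (s * u) • K, u • E; F, u • 1 - s • K]

theorem IsQuantumTriple.lOperator_exchange {q s : R} {K E F : A} (h : IsQuantumTriple q s K E F)
    (u₁ u₂ : R) :
    (1 ⊗ₖ lOperator s K E F u₂) * (lOperator s K E F u₁ ⊗ₖ 1) *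
        (rMatrix q u₁ u₂).map (algebraMap R A) =
      (rMatrix q u₁ u₂).map (algebraMap R A) *
        ((lOperator s K E F u₁ ⊗ₖ 1) * (1 ⊗ₖ lOperator s K E F u₂)) := by
  ext ⟨a, b⟩ ⟨c, d⟩
  rw [Matrix.mul_apply, Matrix.mul_apply]
  simp only [Fintype.sum_prod_type, Fin.sum_univ_two, Matrix.map_apply,
    kronecker_one_mul_one_kronecker_apply, one_kronecker_mul_kronecker_one_apply,
    Algebra.algebraMap_eq_smul_one, mul_smul_comm, smul_mul_assoc, mul_one, one_mul]
  -- After reordering every product to `E`, `K`, `F`, each entry is a linear identity in monomials.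
  fin_cases a <;> fin_cases b <;> fin_cases c <;> fin_cases d <;>
    simp only [Fin.zero_eta, Fin.mk_one, rMatrix, lOperator, Matrix.of_apply, Matrix.cons_val,
      mul_sub, sub_mul, mul_one, one_mul, smul_mul_assoc, mul_smul_comm, h.mul_raise, h.lower_mul,
      h.lower_mul_raise] <;>
    module

end ExchangeRelation

section Representation

variable {R : Type*} [CommRing R]

/-- The operator `q ^ N` on functions of the number `N` of vertical arrows. -/
def qPowNumber (q : R) : Module.End R (ℕ → R) where
  toFun f m := q ^ m * f m
  map_add' _ _ := funext fun _ => mul_add ..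
  map_smul' _ _ := funext fun _ => mul_left_comm ..

/-- The operator `E` of the higher spin six vertex model: row `m` of its matrix has its only entry
in column `m - 1`, where a vertical arrow turns into a horizontal one. -/
def arrowEmission (q s : R) : Module.End R (ℕ → R) where
  toFun f
    | 0 => 0
    | m + 1 => (1 - s ^ 2 * q ^ m) * f m
  map_add' f g := by ext (_ | m) <;> simp [mul_add]
  map_smul' c f := by ext (_ | m) <;> simp [mul_left_comm]

/-- The operator `F` of the higher spin six vertex model: row `m` of its matrix has its only entry
in column `m + 1`, where a horizontal arrow turns into a vertical one. -/
def arrowAbsorption (q : R) : Module.End R (ℕ → R) where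
  toFun f m := (1 - q ^ (m + 1)) * f (m + 1)
  map_add' _ _ := funext fun _ => mul_add ..
  map_smul' _ _ := funext fun _ => mul_left_comm ..

lemma isQuantumTriple_arrow (q s : R) :
    IsQuantumTriple q s (qPowNumber q) (arrowEmission q s) (arrowAbsorption q) where
  mul_raise := by
    ext f (_ | m)
    · change q ^ 0 * 0 = q * 0
      ring
    · change q ^ (m + 1) * ((1 - s ^ 2 * q ^ m) * f m) =
        q * ((1 - s ^ 2 * q ^ m) * (q ^ m * f m))
      ring
  lower_mul := by
    ext f m
    change (1 - q ^ (m + 1)) * (q ^ (m + 1) * f (m + 1)) =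
      q * (q ^ m * ((1 - q ^ (m + 1)) * f (m + 1)))
    ring
  lower_mul_raise := by
    ext f (_ | m)
    · change (1 - q ^ (0 + 1)) * ((1 - s ^ 2 * q ^ 0) * f 0) =
        q * 0 + (1 - q) * (f 0 - s ^ 2 * (q ^ 0 * (q ^ 0 * f 0)))
      ring
    · change (1 - q ^ (m + 2)) * ((1 - s ^ 2 * q ^ (m + 1)) * f (m + 1)) =
        q * ((1 - s ^ 2 * q ^ m) * ((1 - q ^ (m + 1)) * f (m + 1))) +
          (1 - q) * (f (m + 1) - s ^ 2 * (q ^ (m + 1) * (q ^ (m + 1) * f (m + 1))))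
      ring

/-- The L-operator acting on functions of the number of vertical arrows: its matrix elements are
the vertex weights multiplied by `1 - s u`. -/
def vertexOperator (q s u : R) : Matrix (Fin 2) (Fin 2) (Module.End R (ℕ → R)) :=
  lOperator s (qPowNumber q) (arrowEmission q s) (arrowAbsorption q) u

lemma vertexOperator_zero_zero_apply (q s u : R) (f : ℕ → R) (m : ℕ) :
    vertexOperator q s u 0 0 f m = (1 - s * q ^ m * u) * f m := by
  change f m - s * u * (q ^ m * f m) = _
  ring

lemma vertexOperator_zero_one_apply_zero (q s u : R) (f : ℕ → R) :
    vertexOperator q s u 0 1 f 0 = 0 :=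
  mul_zero u

lemma vertexOperator_zero_one_apply_succ (q s u : R) (f : ℕ → R) (m : ℕ) :
    vertexOperator q s u 0 1 f (m + 1) = (1 - s ^ 2 * q ^ m) * u * f m := by
  change u * ((1 - s ^ 2 * q ^ m) * f m) = _
  ring

lemma vertexOperator_one_zero_apply (q s u : R) (f : ℕ → R) (m : ℕ) :
    vertexOperator q s u 1 0 f m = (1 - q ^ (m + 1)) * f (m + 1) :=
  rfl

lemma vertexOperator_one_one_apply (q s u : R) (f : ℕ → R) (m : ℕ) :
    vertexOperator q s u 1 1 f m = (u - s * q ^ m) * f m := by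
  change u * f m - s * (q ^ m * f m) = _
  ring

theorem statement0_general (q s u₁ u₂ : R) (f : ℕ → R) (m : ℕ) :
    ((1 ⊗ₖ vertexOperator q s u₂) * (vertexOperator q s u₁ ⊗ₖ 1)).map (fun T => T f m) *
        rMatrix q u₁ u₂ =
      rMatrix q u₁ u₂ *
        ((vertexOperator q s u₁ ⊗ₖ 1) * (1 ⊗ₖ vertexOperator q s u₂)).map (fun T => T f m) := by
  let φ : Module.End R (ℕ → R) →ₗ[R] R := LinearMap.proj m ∘ₗ LinearMap.applyₗ f
  have exchange := (isQuantumTriple_arrow q s).lOperator_exchange u₁ u₂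
  exact (map_mul_map_algebraMap φ _ _).symm.trans
    ((congrArg (Matrix.map · φ) exchange).trans (map_map_algebraMap_mul φ _ _))

end Representation

lemma Xmat_eq_rMatrix (q u₁ u₂ : ℂ) : Xmat q u₁ u₂ = rMatrix q u₁ u₂ := by
  ext ⟨a, b⟩ ⟨c, d⟩
  fin_cases a <;> fin_cases b <;> fin_cases c <;> fin_cases d <;> simp [Xmat, rMatrix]

lemma vw_eq_zero (q u s : ℂ) {i₁ j₁ i₂ j₂ : ℕ} (h : i₁ + j₁ ≠ i₂ + j₂) :
    vw q u s i₁ j₁ i₂ j₂ = 0 := by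
  unfold vw
  split_ifs <;> first | rfl | omega

lemma vw_zero_zero (q u s : ℂ) (g : ℕ) :
    vw q u s g 0 g 0 = (1 - s * q ^ g * u) / (1 - s * u) := by
  simp [vw]

lemma vw_zero_one (q u s : ℂ) (g : ℕ) :
    vw q u s (g + 1) 0 g 1 = (1 - s ^ 2 * q ^ g) * u / (1 - s * u) := by
  simp [vw]

lemma vw_one_one (q u s : ℂ) (g : ℕ) :
    vw q u s g 1 g 1 = (u - s * q ^ g) / (1 - s * u) := by
  simp [vw]

lemma vw_one_zero (q u s : ℂ) (g : ℕ) :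
    vw q u s g 1 (g + 1) 0 = (1 - q ^ (g + 1)) / (1 - s * u) := by
  simp [vw]

lemma tsum_vw_mul_eq_single (q u s : ℂ) {i₁ j₁ i₂ j₂ : ℕ} (h : i₁ + j₁ = i₂ + j₂) (f : ℕ → ℂ) :
    ∑' l, vw q u s i₁ j₁ l j₂ * f l = vw q u s i₁ j₁ i₂ j₂ * f i₂ :=
  tsum_eq_single i₂ fun l hl => by rw [vw_eq_zero q u s (by omega), zero_mul]

lemma tsum_vw_mul (q s u : ℂ) (m : ℕ) (j j' : Fin 2) (f : ℕ → ℂ) :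
    ∑' l, vw q u s m j l j' * f l = (1 - s * u)⁻¹ * vertexOperator q s u j j' f m :=
  match j, j', m with
  | 0, 0, m => by
    rw [Fin.val_zero, tsum_vw_mul_eq_single q u s (show m + 0 = m + 0 from rfl), vw_zero_zero,
      vertexOperator_zero_zero_apply]
    ring
  | 0, 1, 0 => by
    have no_arrow (l : ℕ) : vw q u s 0 0 l 1 = 0 := vw_eq_zero q u s (by omega)
    simp [no_arrow, vertexOperator_zero_one_apply_zero]
  | 0, 1, m + 1 => by
    rw [Fin.val_zero, Fin.val_one, tsum_vw_mul_eq_single q u s (show m + 1 + 0 = m + 1 from rfl),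
      vw_zero_one, vertexOperator_zero_one_apply_succ]
    ring
  | 1, 0, m => by
    rw [Fin.val_zero, Fin.val_one, tsum_vw_mul_eq_single q u s (show m + 1 = m + 1 + 0 from rfl),
      vw_one_zero, vertexOperator_one_zero_apply]
    ring
  | 1, 1, m => by
    rw [Fin.val_one, tsum_vw_mul_eq_single q u s (show m + 1 = m + 1 from rfl), vw_one_one,
      vertexOperator_one_one_apply]
    ring

lemma vw_eq_vertexOperator_single (q s u : ℂ) (l n : ℕ) (j j' : Fin 2) :
    vw q u s l j n j' = (1 - s * u)⁻¹ * vertexOperator q s u j j' (Pi.single n 1) l := by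
  rw [← tsum_vw_mul, tsum_eq_single n fun i hi => by simp [hi]]
  simp

lemma twoVertex_apply (q s u₁ u₂ : ℂ) (m n : ℕ) (a b c d : Fin 2) :
    twoVertex q s u₁ u₂ m n (a, b) (c, d) =
      ((1 - s * u₁)⁻¹ * (1 - s * u₂)⁻¹) *
        (vertexOperator q s u₁ a c * vertexOperator q s u₂ b d) (Pi.single n 1) m := by
  have vw_column : (fun l => vw q u₂ s l b n d) =
      (1 - s * u₂)⁻¹ • vertexOperator q s u₂ b d (Pi.single n 1) :=
    funext fun l => vw_eq_vertexOperator_single q s u₂ l n b d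
  calc twoVertex q s u₁ u₂ m n (a, b) (c, d)
      = (1 - s * u₁)⁻¹ * vertexOperator q s u₁ a c (fun l => vw q u₂ s l b n d) m :=
        tsum_vw_mul q s u₁ m a c _
    _ = _ := by
        rw [vw_column, map_smul, Pi.smul_apply, smul_eq_mul, mul_assoc, Module.End.mul_apply]

lemma twoVertex_eq_smul (q s u₁ u₂ : ℂ) (m n : ℕ) :
    twoVertex q s u₁ u₂ m n = ((1 - s * u₁)⁻¹ * (1 - s * u₂)⁻¹) •
      ((vertexOperator q s u₁ ⊗ₖ 1) * (1 ⊗ₖ vertexOperator q s u₂)).map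
        (fun T => T (Pi.single n 1) m) := by
  ext ⟨a, b⟩ ⟨c, d⟩
  rw [twoVertex_apply, Matrix.smul_apply, Matrix.map_apply, kronecker_one_mul_one_kronecker_apply,
    smul_eq_mul]

lemma twoVertexT_eq_smul (q s u₁ u₂ : ℂ) (m n : ℕ) :
    twoVertexT q s u₂ u₁ m n = ((1 - s * u₁)⁻¹ * (1 - s * u₂)⁻¹) •
      ((1 ⊗ₖ vertexOperator q s u₂) * (vertexOperator q s u₁ ⊗ₖ 1)).map
        (fun T => T (Pi.single n 1) m) := by
  ext ⟨a, b⟩ ⟨c, d⟩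
  rw [twoVertexT, Matrix.of_apply, twoVertex_apply, Matrix.smul_apply, Matrix.map_apply,
    one_kronecker_mul_kronecker_one_apply, smul_eq_mul, mul_comm (1 - s * u₁)⁻¹]

/-- **Yang–Baxter equation** for the higher spin six vertex weights:
`w̃^{(m,n)}_{u₂,u₁;s} · X = X · w^{(m,n)}_{u₁,u₂;s}`.  In particular `X` does not depend on
`m`, `n`, or `s`. -/
theorem statement0 (q s u₁ u₂ : ℂ) (h₁ : s * u₁ ≠ 1) (h₂ : s * u₂ ≠ 1) (m n : ℕ) :
    twoVertexT q s u₂ u₁ m n * Xmat q u₁ u₂ = Xmat q u₁ u₂ * twoVertex q s u₁ u₂ m n := by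
  rw [twoVertexT_eq_smul, twoVertex_eq_smul, Xmat_eq_rMatrix, Matrix.smul_mul, Matrix.mul_smul,
    statement0_general]

end
end

section
/- Product formula for the fused stochastic weights at u = s (q-Hahn degeneration). Let J ∈ ℤ_{≥1} and let q, s ∈ ℂ satisfy: q ≠ 0, q is not a root of unity, s ≠ 0, and s² q^i ≠ 1 for all i ≥ 0. Then for all i₁, i₂ ∈ ℤ_{≥0} and j₁, j₂ ∈ {0, …, J}, the q-hypergeometric expression for the fused weight simplifies at u = s to a product: L^{(J)}_{s,s}(i₁, j₁; i₂, j₂) = 1_{i₁+j₁=i₂+j₂} · 1_{j₂≤i₁} · (s² q^J)^{j₂} · (q^{−J}; q)_{j₂} (s² q^J; q)_{i₁−j₂}/(s²; q)_{i₁} · (q; q)_{i₁}/((q; q)_{j₂} (q; q)_{i₁−j₂}). -/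
noncomputable section

open Finset

/-- The `q`-Pochhammer symbol `(a; q)_m` for `m ∈ ℕ`. -/
def qp (a q : ℂ) (m : ℕ) : ℂ := ∏ i ∈ Finset.range m, (1 - a * q ^ i)

/-- The `q`-Pochhammer symbol `(a; q)_m` for `m ∈ ℤ`:
`(a;q)_m = ∏_{i=0}^{m−1}(1 − a qⁱ)` for `m ≥ 0` and
`(a;q)_m = ∏_{k=0}^{−m−1}(1 − a q^{m+k})^{−1}` for `m < 0`. -/
def qpZ (a q : ℂ) (m : ℤ) : ℂ :=
  if 0 ≤ m then ∏ i ∈ Finset.range m.toNat, (1 - a * q ^ i)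
  else (∏ k ∈ Finset.range (-m).toNat, (1 - a * q ^ (m + (k : ℤ))))⁻¹

/-- The regularized terminating `q`-hypergeometric sum
`₄φ̄₃(q^{−n}; a₁,a₂,a₃; b₁,b₂,b₃ | q, z)
  = Σ_{k=0}^{n} z^k (q^{−n};q)_k/(q;q)_k ∏_{i=1}^{3} (a_i;q)_k (b_i q^k;q)_{n−k}`. -/
def qHyp4 (q z : ℂ) (n : ℕ) (a₁ a₂ a₃ b₁ b₂ b₃ : ℂ) : ℂ :=
  ∑ k ∈ Finset.range (n + 1),
    z ^ k * qp (q ^ (-(n : ℤ))) q k / qp q q k *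
      (qp a₁ q k * qp (b₁ * q ^ k) q (n - k)) *
      (qp a₂ q k * qp (b₂ * q ^ k) q (n - k)) *
      (qp a₃ q k * qp (b₃ * q ^ k) q (n - k))

/-- The fused stochastic vertex weights `L^{(J)}_{u,s}(i₁, j₁; i₂, j₂)`. -/
def LJ (q u s : ℂ) (J i₁ j₁ i₂ j₂ : ℕ) : ℂ :=
  if i₁ + j₁ = i₂ + j₂ then
    (-1 : ℂ) ^ i₁ * q ^ (i₁ * (i₁ + 2 * j₁ - 1) / 2) * u ^ i₁ *
        s ^ ((j₁ : ℤ) + (j₂ : ℤ) - (i₂ : ℤ)) * qpZ (u * s⁻¹) q ((j₂ : ℤ) - (i₁ : ℤ)) /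
        (qp q q i₂ * qp (s * u) q (i₂ + j₂) * qpZ (q ^ (J + 1 - j₁)) q ((j₁ : ℤ) - (j₂ : ℤ))) *
      qHyp4 q q i₂ (q ^ (-(i₁ : ℤ))) (s * u * q ^ J) (q * s * u⁻¹)
        (s ^ 2) (q ^ (1 + (j₂ : ℤ) - (i₁ : ℤ))) (q ^ ((J : ℤ) + 1 - (i₂ : ℤ) - (j₂ : ℤ)))
  else 0

/-!
Write `i₁ = p + j₂`, so that `i₂ = p + j₁`; for `i₁ < j₂` the factor `(1; q)_{j₂ - i₁}` vanishes.
At `u = s` the third numerator parameter of the `₄φ̄₃` is `q`, which cancels the denominators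
`(q; q)_k`, while the denominator parameter `q ^ (1 - p)` kills the terms with `k < p`. Shifting
the summation index by `p` leaves a balanced terminating `₃φ̄₂`, which the `q`-Pfaff–Saalschütz
formula sums to a product.

For the latter, multiply out the denominators: with `⟦l, r⟧` the Gaussian binomial coefficient,
`∑_{l + r = N} ⟦l, r⟧ y ^ l (a)_l (b)_l (a b y q ^ l)_r (y)_r = (a y)_N (b y)_N`.
By the `q`-Pascal rule, the sum for `N + 1` is `(1 - a y q ^ N) (1 - b y q ^ N)` times the sum for
`N`, up to two sums that agree after the shift `(l + 1, r) ↔ (l, r + 1)`.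
-/

section QPochhammer

lemma qp_zero (a q : ℂ) : qp a q 0 = 1 := by simp [qp]

lemma qp_succ (a q : ℂ) (m : ℕ) : qp a q (m + 1) = qp a q m * (1 - a * q ^ m) :=
  prod_range_succ _ _

lemma qp_add (a q : ℂ) (m r : ℕ) : qp a q (m + r) = qp a q m * qp (a * q ^ m) q r := by
  simp [qp, prod_range_add, pow_add, mul_assoc]

lemma qp_succ_left (a q : ℂ) (m : ℕ) : qp a q (m + 1) = (1 - a) * qp (a * q) q m := by
  rw [add_comm, qp_add, pow_one]
  simp [qp]

lemma qpZ_natCast (a q : ℂ) (m : ℕ) : qpZ a q m = qp a q m := by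
  rw [qpZ, if_pos m.cast_nonneg, Int.toNat_natCast, qp]

variable {q : ℂ}

lemma qp_ne_zero {a : ℂ} (h : ∀ i : ℕ, a * q ^ i ≠ 1) (m : ℕ) : qp a q m ≠ 0 :=
  prod_ne_zero_iff.2 fun i _ => sub_ne_zero.2 (h i).symm

lemma qp_eq_zero {a : ℂ} {i m : ℕ} (h : a * q ^ i = 1) (him : i < m) : qp a q m = 0 :=
  prod_eq_zero (mem_range.2 him) (by rw [h, sub_self])

lemma qp_self_ne_zero (hq : ∀ m : ℕ, 1 ≤ m → q ^ m ≠ 1) (m : ℕ) : qp q q m ≠ 0 :=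
  qp_ne_zero (fun i => by rw [← pow_succ']; exact hq _ i.succ_pos) m

lemma qp_reverse (hq0 : q ≠ 0) {y : ℂ} (hy : y ≠ 0) (r : ℕ) :
    qp (q * (q ^ r)⁻¹ * y⁻¹) q r = (-1) ^ r * (y ^ r)⁻¹ * (q ^ r.choose 2)⁻¹ * qp y q r := by
  induction r with
  | zero => simp [qp_zero]
  | succ r ih =>
    have shift : q * (q ^ (r + 1))⁻¹ * y⁻¹ * q = q * (q ^ r)⁻¹ * y⁻¹ := by
      rw [pow_succ]; field_simp
    rw [qp_succ_left, shift, ih, qp_succ, Nat.choose_succ_succ' r 1, Nat.choose_one_right,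
      pow_add q r]
    field_simp
    ring

lemma qp_inv_pow_mul_qp_self (hq0 : q ≠ 0) (m r : ℕ) :
    qp (q ^ (m + r))⁻¹ q m * qp q q r =
      (-1) ^ m * q ^ m.choose 2 * (q ^ ((m + r) * m))⁻¹ * qp q q (m + r) := by
  have base : (q ^ (m + r))⁻¹ = q * (q ^ m)⁻¹ * (q * q ^ r)⁻¹ := by
    rw [pow_add]; field_simp
  have exponent : (m + r) * m = m.choose 2 + m.choose 2 + m + r * m := by
    qify [Nat.cast_choose_two]
    ring
  rw [base, qp_reverse hq0 (by positivity), exponent, add_comm m r, qp_add q q r m]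
  field_simp
  ring

lemma qp_inv_pow_div_qp_inv_pow (hq0 : q ≠ 0) (hq : ∀ m : ℕ, 1 ≤ m → q ^ m ≠ 1) (p j : ℕ) :
    qp (q ^ (p + j))⁻¹ q p / qp (q ^ p)⁻¹ q p =
      (q ^ (p * j))⁻¹ * (qp q q (p + j) / (qp q q j * qp q q p)) := by
  have num := qp_inv_pow_mul_qp_self hq0 p j
  have den := qp_inv_pow_mul_qp_self hq0 p 0
  rw [qp_zero, mul_one, add_zero] at den
  have hp := qp_self_ne_zero hq p
  have hj := qp_self_ne_zero hq j
  rw [eq_div_of_mul_eq hj num, den, add_mul, pow_add, mul_comm p j]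
  field_simp

lemma qpZ_neg (hq0 : q ≠ 0) (a : ℂ) (p : ℕ) :
    qpZ a q (-(p : ℤ)) = (qp (a * (q ^ p)⁻¹) q p)⁻¹ := by
  rcases p.eq_zero_or_pos with rfl | hp
  · simp [qpZ, qp]
  · rw [qpZ, if_neg (by omega), neg_neg, Int.toNat_natCast, qp]
    congr 1
    refine prod_congr rfl fun k _ => ?_
    rw [zpow_add₀ hq0, zpow_neg, zpow_natCast, zpow_natCast, mul_assoc]

lemma qpZ_pow_succ_mul_qp_self (hq0 : q ≠ 0) (hq : ∀ m : ℕ, 1 ≤ m → q ^ m ≠ 1) (m n : ℕ) :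
    qpZ (q ^ (m + 1)) q ((n : ℤ) - m) * qp q q m = qp q q n := by
  rcases le_total m n with h | h
  · obtain ⟨d, rfl⟩ := Nat.exists_eq_add_of_le h
    rw [Nat.cast_add, add_sub_cancel_left, qpZ_natCast, qp_add, pow_succ', mul_comm]
  · obtain ⟨d, rfl⟩ := Nat.exists_eq_add_of_le h
    have base : q ^ (n + d + 1) * (q ^ d)⁻¹ = q * q ^ n := by
      rw [pow_succ', pow_add]; field_simp
    have hd : qp (q * q ^ n) q d ≠ 0 :=
      right_ne_zero_of_mul (qp_add q q n d ▸ qp_self_ne_zero hq (n + d))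
    rw [Nat.cast_add, sub_add_cancel_left, qpZ_neg hq0, base, qp_add, mul_comm (qp q q n),
      inv_mul_cancel_left₀ hd]

lemma qp_inv_pow_div_qpZ (hq0 : q ≠ 0) (hq : ∀ m : ℕ, 1 ≤ m → q ^ m ≠ 1) {J j₁ j₂ : ℕ}
    (hj₁ : j₁ ≤ J) (hj₂ : j₂ ≤ J) :
    qp (q ^ J)⁻¹ q j₁ / qpZ (q ^ (J + 1 - j₁)) q ((j₁ : ℤ) - j₂) =
      (-1) ^ j₁ * q ^ j₁.choose 2 * (q ^ (J * j₁))⁻¹ *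
        ((-1) ^ j₂ * (q ^ j₂.choose 2)⁻¹ * q ^ (J * j₂)) * qp (q ^ J)⁻¹ q j₂ := by
  have num := qp_inv_pow_mul_qp_self hq0 j₁ (J - j₁)
  have target := qp_inv_pow_mul_qp_self hq0 j₂ (J - j₂)
  rw [Nat.add_sub_cancel' hj₁] at num
  rw [Nat.add_sub_cancel' hj₂] at target
  have den := qpZ_pow_succ_mul_qp_self hq0 hq (J - j₁) (J - j₂)
  have h₁ := qp_self_ne_zero hq (J - j₁)
  have h₂ := qp_self_ne_zero hq (J - j₂)
  rw [show ((J - j₂ : ℕ) : ℤ) - (J - j₁ : ℕ) = j₁ - j₂ by omega,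
    ← Nat.sub_add_comm hj₁] at den
  have sign : (-1 : ℂ) ^ j₂ * (-1) ^ j₂ = 1 := by rw [← mul_pow]; norm_num
  rw [eq_div_of_mul_eq h₁ num, eq_div_of_mul_eq h₁ den, eq_div_of_mul_eq h₂ target]
  field_simp
  linear_combination (-qp q q J) * sign

end QPochhammer

section QBinomial

/-- The Gaussian binomial coefficient `[l + r choose l]_q`, indexed by the sizes `l` and `r` of the
two parts so that sums over its index run over an antidiagonal. It has its usual meaning
only where `(q; q)_l` and `(q; q)_r` are nonzero. -/
def qBinom (q : ℂ) (l r : ℕ) : ℂ := qp q q (l + r) / (qp q q l * qp q q r)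

lemma qBinom_comm (q : ℂ) (l r : ℕ) : qBinom q l r = qBinom q r l := by
  rw [qBinom, qBinom, add_comm, mul_comm (qp q q l)]

variable {q : ℂ}

lemma qBinom_zero_left (hq : ∀ m : ℕ, 1 ≤ m → q ^ m ≠ 1) (r : ℕ) : qBinom q 0 r = 1 := by
  rw [qBinom, zero_add, qp_zero, one_mul, div_self (qp_self_ne_zero hq r)]

lemma one_sub_pow_succ_mul_qBinom_succ_left (hq : ∀ m : ℕ, 1 ≤ m → q ^ m ≠ 1) (l r : ℕ) :
    (1 - q ^ (l + 1)) * qBinom q (l + 1) r = (1 - q ^ (l + r + 1)) * qBinom q l r := by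
  have hl := qp_self_ne_zero hq l
  have hr := qp_self_ne_zero hq r
  have hl' : 1 - q ^ (l + 1) ≠ 0 := sub_ne_zero.2 (hq _ l.succ_pos).symm
  rw [qBinom, qBinom, add_right_comm, qp_succ, qp_succ q q l, ← pow_succ', ← pow_succ']
  field_simp

lemma one_sub_pow_succ_mul_qBinom_succ_right (hq : ∀ m : ℕ, 1 ≤ m → q ^ m ≠ 1) (l r : ℕ) :
    (1 - q ^ (r + 1)) * qBinom q l (r + 1) = (1 - q ^ (l + r + 1)) * qBinom q l r := by
  rw [qBinom_comm, qBinom_comm q l, one_sub_pow_succ_mul_qBinom_succ_left hq, add_comm r l]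

lemma sum_antidiagonal_succ_qBinom_mul (hq : ∀ m : ℕ, 1 ≤ m → q ^ m ≠ 1) (f : ℕ → ℕ → ℂ)
    (N : ℕ) :
    ∑ x ∈ antidiagonal (N + 1), qBinom q x.1 x.2 * f x.1 x.2 =
      ∑ x ∈ antidiagonal N, qBinom q x.1 x.2 * (f x.1 (x.2 + 1) + q ^ x.2 * f (x.1 + 1) x.2) := by
  have hN : 1 - q ^ (N + 1) ≠ 0 := sub_ne_zero.2 (hq _ N.succ_pos).symm
  -- Splitting `1 - q ^ (N + 1) = (1 - q ^ r) + q ^ r * (1 - q ^ l)`, where `l + r = N + 1`, makes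
  -- the boundary terms vanish.
  refine mul_left_cancel₀ hN ?_
  calc (1 - q ^ (N + 1)) * ∑ x ∈ antidiagonal (N + 1), qBinom q x.1 x.2 * f x.1 x.2
    _ = ∑ x ∈ antidiagonal (N + 1), (1 - q ^ x.2) * qBinom q x.1 x.2 * f x.1 x.2 +
        ∑ x ∈ antidiagonal (N + 1),
          (1 - q ^ x.1) * qBinom q x.1 x.2 * (q ^ x.2 * f x.1 x.2) := by
      rw [mul_sum, ← sum_add_distrib]
      refine sum_congr rfl fun x hx => ?_
      rw [← mem_antidiagonal.1 hx, pow_add]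
      ring
    _ = ∑ x ∈ antidiagonal N, (1 - q ^ (N + 1)) * qBinom q x.1 x.2 * f x.1 (x.2 + 1) +
        ∑ x ∈ antidiagonal N,
          (1 - q ^ (N + 1)) * qBinom q x.1 x.2 * (q ^ x.2 * f (x.1 + 1) x.2) := by
      rw [Nat.sum_antidiagonal_succ', Nat.sum_antidiagonal_succ]
      simp only [pow_zero, sub_self, zero_mul, zero_add]
      congr 1 <;> refine sum_congr rfl fun x hx => ?_
      · rw [one_sub_pow_succ_mul_qBinom_succ_right hq, mem_antidiagonal.1 hx]
      · rw [one_sub_pow_succ_mul_qBinom_succ_left hq, mem_antidiagonal.1 hx]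
    _ = _ := by
      rw [← sum_add_distrib, mul_sum]
      exact sum_congr rfl fun x _ => by ring

lemma sum_antidiagonal_qBinom_mul_one_sub_pow_comm (hq : ∀ m : ℕ, 1 ≤ m → q ^ m ≠ 1)
    (g : ℕ → ℕ → ℂ) (N : ℕ) :
    ∑ x ∈ antidiagonal N, qBinom q x.1 x.2 * ((1 - q ^ x.2) * g (x.1 + 1) x.2) =
      ∑ x ∈ antidiagonal N, qBinom q x.1 x.2 * ((1 - q ^ x.1) * g x.1 (x.2 + 1)) := by
  cases N with
  | zero => simp
  | succ N =>
    rw [Nat.sum_antidiagonal_succ', Nat.sum_antidiagonal_succ]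
    simp only [pow_zero, sub_self, zero_mul, mul_zero, zero_add]
    refine sum_congr rfl fun x _ => ?_
    linear_combination g (x.1 + 1) (x.2 + 1) *
      (one_sub_pow_succ_mul_qBinom_succ_right hq x.1 x.2 -
        one_sub_pow_succ_mul_qBinom_succ_left hq x.1 x.2)

end QBinomial

section QSaalschutz

/-- The regularized terminating sum `₃φ̄₂(q^{-n}; a₁, a₂; b₁, b₂ | q, z)`, normalized like
`qHyp4`. -/
def qHyp3 (q z : ℂ) (n : ℕ) (a₁ a₂ b₁ b₂ : ℂ) : ℂ :=
  ∑ k ∈ range (n + 1),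
    z ^ k * qp (q ^ (-(n : ℤ))) q k / qp q q k *
      (qp a₁ q k * qp (b₁ * q ^ k) q (n - k)) *
      (qp a₂ q k * qp (b₂ * q ^ k) q (n - k))

/-- The summand, without its Gaussian binomial coefficient, of the denominator-free form of the
`q`-Saalschütz sum. -/
def saalschutzTerm (q a b y : ℂ) (l r : ℕ) : ℂ :=
  y ^ l * qp a q l * qp b q l * qp (a * b * y * q ^ l) q r * qp y q r

/-- The certificate for `saalschutzTerm_succ`: its sum telescopes against Gaussian binomial
coefficients. Only the values at `(l + 1, r)` with `1 ≤ r` and at `(l, r + 1)` matter. -/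
def saalschutzCert (q a b y : ℂ) (l r : ℕ) : ℂ :=
  y ^ l * qp a q l * qp b q l * qp (a * b * y * q ^ l) q (r - 1) * qp y q r

lemma saalschutzTerm_succ (q a b y : ℂ) (l r : ℕ) :
    saalschutzTerm q a b y l (r + 1) + q ^ r * saalschutzTerm q a b y (l + 1) r =
      (1 - a * y * q ^ (l + r)) * (1 - b * y * q ^ (l + r)) * saalschutzTerm q a b y l r +
        a * b * y * q ^ (l + r) * ((1 - q ^ r) * saalschutzCert q a b y (l + 1) r -
          (1 - q ^ l) * saalschutzCert q a b y l (r + 1)) := by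
  cases r with
  | zero =>
    simp only [saalschutzTerm, saalschutzCert, qp_zero, qp_succ, pow_succ, add_zero, zero_add,
      pow_zero, Nat.sub_self]
    ring
  | succ r =>
    have base : a * b * y * q ^ l * q = a * b * y * q ^ (l + 1) := by ring
    simp only [saalschutzTerm, saalschutzCert, Nat.add_sub_cancel]
    rw [qp_succ _ _ (r + 1), qp_succ_left (a * b * y * q ^ l), base,
      qp_succ (a * b * y * q ^ (l + 1)), qp_succ a, qp_succ b, qp_succ y q (r + 1)]
    ring

variable {q : ℂ}

lemma sum_antidiagonal_qBinom_mul_saalschutzTerm (hq : ∀ m : ℕ, 1 ≤ m → q ^ m ≠ 1)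
    (a b y : ℂ) (N : ℕ) :
    ∑ x ∈ antidiagonal N, qBinom q x.1 x.2 * saalschutzTerm q a b y x.1 x.2 =
      qp (a * y) q N * qp (b * y) q N := by
  induction N with
  | zero => simp [saalschutzTerm, qp_zero, qBinom_zero_left hq]
  | succ N ih =>
    have cert := sum_antidiagonal_qBinom_mul_one_sub_pow_comm hq (saalschutzCert q a b y) N
    calc _ = (1 - a * y * q ^ N) * (1 - b * y * q ^ N) *
          ∑ x ∈ antidiagonal N, qBinom q x.1 x.2 * saalschutzTerm q a b y x.1 x.2 +
        a * b * y * q ^ N *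
          (∑ x ∈ antidiagonal N, qBinom q x.1 x.2 *
              ((1 - q ^ x.2) * saalschutzCert q a b y (x.1 + 1) x.2) -
            ∑ x ∈ antidiagonal N, qBinom q x.1 x.2 *
              ((1 - q ^ x.1) * saalschutzCert q a b y x.1 (x.2 + 1))) := by
          rw [sum_antidiagonal_succ_qBinom_mul hq, ← sum_sub_distrib, mul_sum, mul_sum,
            ← sum_add_distrib]
          refine sum_congr rfl fun x hx => ?_
          rw [saalschutzTerm_succ, mem_antidiagonal.1 hx]
          ring
      _ = _ := by rw [cert, ih, qp_succ (a * y), qp_succ (b * y)]; ring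

lemma qHyp3_balanced_weight_eq (hq0 : q ≠ 0) (hq : ∀ m : ℕ, 1 ≤ m → q ^ m ≠ 1) {y : ℂ}
    (hy : y ≠ 0) (l r : ℕ) :
    q ^ l * qp (q ^ (l + r))⁻¹ q l / qp q q l * qp (q * (q ^ (l + r))⁻¹ * y⁻¹ * q ^ l) q r =
      (-1) ^ (l + r) * (y ^ (l + r))⁻¹ * (q ^ (l + r).choose 2)⁻¹ *
        (qBinom q l r * y ^ l * qp y q r) := by
  have base : q * (q ^ (l + r))⁻¹ * y⁻¹ * q ^ l = q * (q ^ r)⁻¹ * y⁻¹ := by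
    rw [pow_add]; field_simp
  have exponent : (l + r) * l + r.choose 2 = l + l.choose 2 + (l + r).choose 2 := by
    qify [Nat.cast_choose_two]
    ring
  have hexp := congrArg (q ^ ·) exponent
  simp only [pow_add] at hexp
  have hl := qp_self_ne_zero hq l
  have hr := qp_self_ne_zero hq r
  rw [base, qp_reverse hq0 hy, eq_div_of_mul_eq hr (qp_inv_pow_mul_qp_self hq0 l r), qBinom,
    pow_add y, pow_add (-1 : ℂ)]
  field_simp
  linear_combination -(qp q q (l + r) * qp y q r) * hexp

-- Parametrizing the `q`-Pfaff–Saalschütz sum by `y = b₁ / (a₁ * a₂)` allows the numerator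
-- parameters to vanish.
lemma qHyp3_balanced_eq_prod (hq0 : q ≠ 0) (hq : ∀ m : ℕ, 1 ≤ m → q ^ m ≠ 1) {y : ℂ} (hy : y ≠ 0)
    (a b : ℂ) (N : ℕ) :
    qHyp3 q q N a b (a * b * y) (q * (q ^ N)⁻¹ * y⁻¹) =
      (-1) ^ N * (y ^ N)⁻¹ * (q ^ N.choose 2)⁻¹ * (qp (a * y) q N * qp (b * y) q N) := by
  rw [← sum_antidiagonal_qBinom_mul_saalschutzTerm hq,
    Nat.sum_antidiagonal_eq_sum_range_succ (fun l r => qBinom q l r * saalschutzTerm q a b y l r),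
    mul_sum, qHyp3]
  refine sum_congr rfl fun l hl => ?_
  obtain ⟨r, rfl⟩ := Nat.exists_eq_add_of_le (mem_range_succ_iff.1 hl)
  rw [zpow_neg, zpow_natCast, Nat.add_sub_cancel_left, saalschutzTerm]
  linear_combination qp a q l * qp b q l * qp (a * b * y * q ^ l) q r *
    qHyp3_balanced_weight_eq hq0 hq hy l r

end QSaalschutz

section QHypergeometric

variable {q : ℂ}

lemma qHyp4_self_mul_inv_pow (hq0 : q ≠ 0) (hq : ∀ m : ℕ, 1 ≤ m → q ^ m ≠ 1)
    (z a b c d : ℂ) (p N : ℕ) :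
    qHyp4 q z (p + N) a b q c (q * (q ^ p)⁻¹) d =
      z ^ p * qp (q ^ (p + N))⁻¹ q p * qp a q p * qp b q p * qp q q N *
        qHyp3 q z N (a * q ^ p) (b * q ^ p) (c * q ^ p) (d * q ^ p) := by
  have low_terms : ∀ k ∈ range p, qp (q * (q ^ p)⁻¹ * q ^ k) q (p + N - k) = 0 := by
    intro k hk
    obtain ⟨d, rfl⟩ := Nat.exists_eq_add_of_lt (mem_range.1 hk)
    refine qp_eq_zero (i := d) ?_ (by omega)
    rw [pow_succ, pow_add]; field_simp
  rw [qHyp4, add_assoc, sum_range_add, sum_eq_zero, zero_add, qHyp3, mul_sum]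
  · refine sum_congr rfl fun l hl => ?_
    obtain ⟨r, rfl⟩ := Nat.exists_eq_add_of_le (mem_range_succ_iff.1 hl)
    have hpl := qp_self_ne_zero hq (p + l)
    have hl := qp_self_ne_zero hq l
    have base₀ : (q ^ (p + (l + r)))⁻¹ * q ^ p = (q ^ (l + r))⁻¹ := by
      rw [pow_add]; field_simp
    have base₂ : q * (q ^ p)⁻¹ * q ^ (p + l) = q * q ^ l := by
      rw [pow_add]; field_simp
    simp only [zpow_neg, zpow_natCast]
    rw [show p + (l + r) - (p + l) = r by omega, Nat.add_sub_cancel_left,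
      qp_add _ _ p l, qp_add a, qp_add b, qp_add q q l r, base₀, base₂, pow_add z, pow_add q p l,
      ← mul_assoc c, ← mul_assoc d]
    have cancel (x u v w : ℂ) {A : ℂ} (hA : A ≠ 0) : x / A * u * v * (A * w) = x * u * v * w := by
      field_simp
    rw [cancel _ _ _ _ hpl, mul_assoc _ (qp q q l * _), mul_comm (qp q q l * _),
      cancel _ _ _ _ hl]
    ring
  · intro k hk
    rw [low_terms k hk]
    ring

end QHypergeometric

section FusedWeights

variable {q s : ℂ}

lemma qHyp4_fused_eq_prod (hq0 : q ≠ 0) (hq : ∀ m : ℕ, 1 ≤ m → q ^ m ≠ 1) (t : ℂ)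
    (J p j₁ j₂ : ℕ) :
    qHyp4 q q (p + j₁) (q ^ (p + j₂))⁻¹ (t * q ^ J) q t (q * (q ^ p)⁻¹)
        (q * (q ^ j₁)⁻¹ * (q ^ j₂ * (q ^ J)⁻¹)⁻¹ * (q ^ p)⁻¹) =
      q ^ p * qp (q ^ (p + j₁))⁻¹ q p * qp (q ^ (p + j₂))⁻¹ q p * qp (t * q ^ J) q p *
        qp q q j₁ * ((-1) ^ j₁ * ((q ^ j₂ * (q ^ J)⁻¹) ^ j₁)⁻¹ * (q ^ j₁.choose 2)⁻¹ *
          (qp (q ^ J)⁻¹ q j₁ * qp (t * q ^ (p + j₂)) q j₁)) := by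
  have saalschutz := qHyp3_balanced_eq_prod hq0 hq (y := q ^ j₂ * (q ^ J)⁻¹) (by positivity)
    (q ^ j₂)⁻¹ (t * q ^ J * q ^ p) j₁
  have ha : (q ^ j₂)⁻¹ * (q ^ j₂ * (q ^ J)⁻¹) = (q ^ J)⁻¹ := by field_simp
  have hb : t * q ^ J * q ^ p * (q ^ j₂ * (q ^ J)⁻¹) = t * q ^ (p + j₂) := by
    rw [pow_add]; field_simp
  have hc : (q ^ j₂)⁻¹ * (t * q ^ J * q ^ p) * (q ^ j₂ * (q ^ J)⁻¹) = t * q ^ p := by field_simp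
  have ha₁ : (q ^ (p + j₂))⁻¹ * q ^ p = (q ^ j₂)⁻¹ := by
    rw [pow_add]; field_simp
  rw [ha, hb, hc] at saalschutz
  rw [qHyp4_self_mul_inv_pow hq0 hq, ha₁, inv_mul_cancel_right₀ (pow_ne_zero p hq0), saalschutz]

-- The subtraction is truncated, harmlessly, only at `i = j = 0`.
lemma mul_add_two_mul_sub_one_div_two (i j : ℕ) :
    i * (i + 2 * j - 1) / 2 = i.choose 2 + i * j := by
  cases i with
  | zero => simp
  | succ i =>
    rw [Nat.choose_two_right, Nat.add_sub_cancel, add_right_comm, Nat.add_sub_cancel, mul_add,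
      mul_left_comm, Nat.add_mul_div_left _ _ two_pos]

lemma LJ_self_eq_zero_of_lt (hs : s ≠ 0) {J i₁ j₁ i₂ j₂ : ℕ} (h : i₁ < j₂) :
    LJ q s s J i₁ j₁ i₂ j₂ = 0 := by
  have vanish : qpZ (s * s⁻¹) q ((j₂ : ℤ) - i₁) = 0 := by
    rw [mul_inv_cancel₀ hs, ← Nat.cast_sub h.le, qpZ_natCast]
    exact qp_eq_zero (i := 0) (by simp) (by omega)
  rw [LJ, vanish]
  simp

lemma LJ_self_add_eq_mul_qHyp4 (hq0 : q ≠ 0) (hs : s ≠ 0) (J p j₁ j₂ : ℕ) :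
    LJ q s s J (p + j₂) j₁ (p + j₁) j₂ =
      (-1) ^ (p + j₂) * q ^ ((p + j₂).choose 2 + (p + j₂) * j₁) * (s ^ 2) ^ j₂ *
        (qp (q ^ p)⁻¹ q p)⁻¹ /
        (qp q q (p + j₁) * qp (s ^ 2) q (p + j₂ + j₁) *
          qpZ (q ^ (J + 1 - j₁)) q ((j₁ : ℤ) - j₂)) *
      qHyp4 q q (p + j₁) (q ^ (p + j₂))⁻¹ (s ^ 2 * q ^ J) q (s ^ 2) (q * (q ^ p)⁻¹)
        (q * (q ^ j₁)⁻¹ * (q ^ j₂ * (q ^ J)⁻¹)⁻¹ * (q ^ p)⁻¹) := by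
  have hpoch : qpZ (s * s⁻¹) q ((j₂ : ℤ) - (p + j₂ : ℕ)) = (qp (q ^ p)⁻¹ q p)⁻¹ := by
    rw [show (j₂ : ℤ) - (p + j₂ : ℕ) = -(p : ℤ) by push_cast; ring, mul_inv_cancel₀ hs,
      qpZ_neg hq0, one_mul]
  have hspow : s ^ (p + j₂) * s ^ ((j₁ : ℤ) + j₂ - (p + j₁ : ℕ)) = (s ^ 2) ^ j₂ := by
    rw [← zpow_natCast, ← zpow_add₀ hs, ← pow_mul, ← zpow_natCast]
    congr 1
    push_cast
    ring
  have hb₂ : q ^ (1 + (j₂ : ℤ) - (p + j₂ : ℕ)) = q * (q ^ p)⁻¹ := by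
    rw [show 1 + (j₂ : ℤ) - (p + j₂ : ℕ) = 1 - p by push_cast; ring, zpow_sub₀ hq0, zpow_one,
      zpow_natCast, div_eq_mul_inv]
  have hb₃ : q ^ ((J : ℤ) + 1 - (p + j₁ : ℕ) - j₂) =
      q * (q ^ j₁)⁻¹ * (q ^ j₂ * (q ^ J)⁻¹)⁻¹ * (q ^ p)⁻¹ := by
    rw [Nat.cast_add, zpow_sub₀ hq0, zpow_sub₀ hq0, zpow_add₀ hq0, zpow_add₀ hq0, zpow_one]
    simp only [zpow_natCast]
    field_simp
  rw [LJ, if_pos (by ring), hpoch, hb₂, hb₃, mul_add_two_mul_sub_one_div_two, 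
    mul_assoc _ (s ^ (p + j₂)), hspow, zpow_neg, zpow_natCast, mul_inv_cancel_right₀ hs, ← pow_two,
    show p + j₁ + j₂ = p + j₂ + j₁ by ring]

lemma fused_prefactor_eq_pow (hq0 : q ≠ 0) (J p j₁ j₂ : ℕ) :
    (-1) ^ (p + j₂) * q ^ ((p + j₂).choose 2 + (p + j₂) * j₁) * q ^ p *
        ((-1) ^ p * q ^ p.choose 2 * (q ^ ((p + j₁) * p))⁻¹) * (q ^ (p * j₂))⁻¹ *
        ((-1) ^ j₁ * ((q ^ j₂ * (q ^ J)⁻¹) ^ j₁)⁻¹ * (q ^ j₁.choose 2)⁻¹) *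
        ((-1) ^ j₁ * q ^ j₁.choose 2 * (q ^ (J * j₁))⁻¹ *
          ((-1) ^ j₂ * (q ^ j₂.choose 2)⁻¹ * q ^ (J * j₂))) =
      (q ^ J) ^ j₂ := by
  have sign (n : ℕ) : (-1 : ℂ) ^ n * (-1) ^ n = 1 := by rw [← mul_pow]; norm_num
  have exponent : (p + j₂).choose 2 + (p + j₂) * j₁ + p + p.choose 2 =
      (p + j₁) * p + p * j₂ + j₂ * j₁ + j₂.choose 2 := by
    qify [Nat.cast_choose_two]
    ring
  have hy : ((q ^ j₂ * (q ^ J)⁻¹) ^ j₁)⁻¹ = q ^ (J * j₁) * (q ^ (j₂ * j₁))⁻¹ := by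
    rw [pow_mul, pow_mul, mul_pow, inv_pow, mul_inv, inv_inv, mul_comm]
  calc _ = ((-1) ^ p * (-1) ^ p) * ((-1) ^ j₁ * (-1) ^ j₁) * ((-1) ^ j₂ * (-1) ^ j₂) *
        (q ^ j₁.choose 2 * (q ^ j₁.choose 2)⁻¹) * (q ^ (J * j₁) * (q ^ (J * j₁))⁻¹) *
        (q ^ ((p + j₂).choose 2 + (p + j₂) * j₁ + p + p.choose 2) *
          (q ^ ((p + j₁) * p + p * j₂ + j₂ * j₁ + j₂.choose 2))⁻¹) * (q ^ J) ^ j₂ := by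
        rw [hy]; ring
    _ = _ := by
      simp only [exponent, sign, mul_inv_cancel₀ (pow_ne_zero _ hq0), one_mul]

lemma LJ_self_add_eq_prod (hq0 : q ≠ 0) (hq : ∀ m : ℕ, 1 ≤ m → q ^ m ≠ 1) (hs : s ≠ 0)
    (hsq : ∀ i : ℕ, s ^ 2 * q ^ i ≠ 1) {J j₁ j₂ : ℕ} (hj₁ : j₁ ≤ J) (hj₂ : j₂ ≤ J) (p : ℕ) :
    LJ q s s J (p + j₂) j₁ (p + j₁) j₂ =
      (s ^ 2 * q ^ J) ^ j₂ *
        (qp (q ^ J)⁻¹ q j₂ * qp (s ^ 2 * q ^ J) q p / qp (s ^ 2) q (p + j₂)) *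
        (qp q q (p + j₂) / (qp q q j₂ * qp q q p)) := by
  have hp₁ : qp (q ^ (p + j₁))⁻¹ q p * qp q q j₁ / qp q q (p + j₁) =
      (-1) ^ p * q ^ p.choose 2 * (q ^ ((p + j₁) * p))⁻¹ := by
    rw [qp_inv_pow_mul_qp_self hq0, mul_div_cancel_right₀ _ (qp_self_ne_zero hq _)]
  have hp₂ := qp_inv_pow_div_qp_inv_pow hq0 hq p j₂
  have hJ := qp_inv_pow_div_qpZ hq0 hq hj₁ hj₂
  have hs₂ : qp (s ^ 2 * q ^ (p + j₂)) q j₁ / qp (s ^ 2) q (p + j₂ + j₁) =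
      (qp (s ^ 2) q (p + j₂))⁻¹ := by
    have hne := qp_ne_zero hsq (p + j₂ + j₁)
    rw [qp_add] at hne ⊢
    rw [div_mul_cancel_right₀ (right_ne_zero_of_mul hne)]
  rw [LJ_self_add_eq_mul_qHyp4 hq0 hs, qHyp4_fused_eq_prod hq0 hq, mul_pow (s ^ 2),
    ← fused_prefactor_eq_pow hq0 J p j₁ j₂, ← hp₁]
  calc _ = (-1) ^ (p + j₂) * q ^ ((p + j₂).choose 2 + (p + j₂) * j₁) * q ^ p *
        (qp (q ^ (p + j₁))⁻¹ q p * qp q q j₁ / qp q q (p + j₁)) *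
        ((-1) ^ j₁ * ((q ^ j₂ * (q ^ J)⁻¹) ^ j₁)⁻¹ * (q ^ j₁.choose 2)⁻¹) *
        (qp (q ^ J)⁻¹ q j₁ / qpZ (q ^ (J + 1 - j₁)) q ((j₁ : ℤ) - j₂)) *
        (qp (q ^ (p + j₂))⁻¹ q p / qp (q ^ p)⁻¹ q p) *
        (qp (s ^ 2 * q ^ (p + j₂)) q j₁ / qp (s ^ 2) q (p + j₂ + j₁)) *
        qp (s ^ 2 * q ^ J) q p * (s ^ 2) ^ j₂ := by ring
    _ = _ := by rw [hp₂, hJ, hs₂]; ring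

end FusedWeights

/-- **Product formula for the fused stochastic weights at `u = s`** (`q`-Hahn degeneration):
the `q`-hypergeometric expression for `L^{(J)}_{s,s}` simplifies to a product. -/
theorem statement10 (q s : ℂ) (J : ℕ) (hJ : 1 ≤ J) (hq0 : q ≠ 0)
    (hq : ∀ m : ℕ, 1 ≤ m → q ^ m ≠ 1) (hs : s ≠ 0) (hsq : ∀ i : ℕ, s ^ 2 * q ^ i ≠ 1)
    (i₁ j₁ i₂ j₂ : ℕ) (hj₁ : j₁ ≤ J) (hj₂ : j₂ ≤ J) :
    LJ q s s J i₁ j₁ i₂ j₂ =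
      if i₁ + j₁ = i₂ + j₂ ∧ j₂ ≤ i₁ then
        (s ^ 2 * q ^ J) ^ j₂ *
          (qp (q ^ (-(J : ℤ))) q j₂ * qp (s ^ 2 * q ^ J) q (i₁ - j₂) / qp (s ^ 2) q i₁) *
          (qp q q i₁ / (qp q q j₂ * qp q q (i₁ - j₂)))
      else 0 := by
  by_cases h : i₁ + j₁ = i₂ + j₂ ∧ j₂ ≤ i₁
  · obtain ⟨p, rfl⟩ := Nat.exists_eq_add_of_le' h.2
    obtain rfl : i₂ = p + j₁ := by omega
    rw [if_pos h, LJ_self_add_eq_prod hq0 hq hs hsq hj₁ hj₂, zpow_neg, zpow_natCast,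
      Nat.add_sub_cancel]
  · rw [if_neg h]
    rcases not_and_or.1 h with hij | hlt
    · rw [LJ, if_neg hij]
    · exact LJ_self_eq_zero_of_lt hs (not_le.1 hlt)

end
end

section
/- Evaluation of the specialization G_ν(ϱ). Fix n ≥ 0 and ν ∈ Sign⁺_n with exactly k parts equal to 0, and assume q ≠ 0 and all ξ_ℓ, s_ℓ are nonzero. For ε ∈ ℂ ∖ {0} define g(ε) := [(s_0² q^k; q)_{n−k} · (ξ_0 q^{1+k−n}/(s_0 ε); q)_{n−k} · (s_0 ε/ξ_0; q)_{n−k} · (1; q)_k] / [(s_0 ξ_0/ε; q^{−1})_{n−k} · (s_0 ε/ξ_0; q)_n] · ∏_{j=1}^{n−k} [ 1/(1 − s_{ν_j} ξ_{ν_j}^{−1} q^{j−1} ε) · ∏_{ℓ=0}^{ν_j − 1} (ξ_ℓ^{−1} q^{j−1} ε − s_ℓ)/(1 − s_ℓ ξ_ℓ^{−1} q^{j−1} ε) ]; this g(ε) is the result of substituting q^J := ξ_0/(s_0 ε) into the explicit product formula (rational in q^J) for the principal specialization G_ν(ε, qε, …, q^{J−1}ε | ξ̄, S). Then, as ε → 0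 along nonzero values, g(ε) converges: if ν_n ≥ 1 (so k = 0) the limit equals (−S)^ν · (s_0²; q)_n · s_0^{−2n}, where (−S)^ν := ∏_{i=1}^{n} ∏_{j=0}^{ν_i−1}(−s_j); and if ν_n = 0 (so k ≥ 1) then g ≡ 0, so the limit is 0. In particular the limit does not depend on the inhomogeneity parameters ξ. -/
noncomputable section

open Finset

/-- The `q⁻¹`-Pochhammer symbol `(a; q⁻¹)_m = ∏_{i=0}^{m−1} (1 − a q^{−i})`. -/
def qpD (a q : ℂ) (m : ℕ) : ℂ := ∏ i ∈ Finset.range m, (1 - a * q ^ (-(i : ℤ)))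

/-- `(−S)^ν := ∏_{i=1}^{n} ∏_{j=0}^{ν_i−1} (−s_j)`. -/
def mS (s : ℕ → ℂ) {n : ℕ} (ν : Fin n → ℕ) : ℂ :=
  ∏ i : Fin n, ∏ j ∈ Finset.range (ν i), -s j

/-- The result `g(ε)` of substituting `q^J := ξ₀/(s₀ ε)` into the explicit product formula
for the principal specialization `G_ν(ε, qε, …, q^{J−1}ε | ξ̄, S)`, where `ν ∈ Sign⁺_n`
has exactly `k` zero parts. -/
def gfun (q : ℂ) (ξ s : ℕ → ℂ) {n : ℕ} (ν : Fin n → ℕ) (k : ℕ) (ε : ℂ) : ℂ :=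
  qp (s 0 ^ 2 * q ^ k) q (n - k) *
      qp (ξ 0 * q ^ (1 + (k : ℤ) - (n : ℤ)) / (s 0 * ε)) q (n - k) *
      qp (s 0 * ε / ξ 0) q (n - k) * qp 1 q k /
      (qpD (s 0 * ξ 0 / ε) q (n - k) * qp (s 0 * ε / ξ 0) q n) *
    ∏ j ∈ Finset.univ.filter fun j : Fin n => (j : ℕ) < n - k,
      (1 / (1 - s (ν j) * (ξ (ν j))⁻¹ * (q ^ (j : ℕ) * ε)) *
        ∏ ℓ ∈ Finset.range (ν j),
          ((ξ ℓ)⁻¹ * (q ^ (j : ℕ) * ε) - s ℓ) / (1 - s ℓ * (ξ ℓ)⁻¹ * (q ^ (j : ℕ) * ε)))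

/-! Reversing the factors turns `(c q^{1-n}; q)_n` into `(c; q⁻¹)_n`. For `k = 0` the two symbols of
`g(ε)` whose arguments blow up as `ε → 0` therefore combine into a quotient
`(a/ε; q⁻¹)_n / (b/ε; q⁻¹)_n`, which tends to `(a/b)^n = s₀^{-2n}` factor by factor; this is where
`ξ₀` cancels. All remaining factors are continuous at `ε = 0`. For `k ≥ 1` the factor `(1; q)_k`
vanishes. -/

open Filter Topology

theorem tendsto_one_sub_div_div_one_sub_div {𝕜 : Type*} [Field 𝕜] [TopologicalSpace 𝕜]
    [IsTopologicalDivisionRing 𝕜] (a : 𝕜) {b : 𝕜} (hb : b ≠ 0) :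
    Tendsto (fun ε : 𝕜 => (1 - a / ε) / (1 - b / ε)) (𝓝[≠] 0) (𝓝 (a / b)) := by
  have hcont : ContinuousAt (fun ε : 𝕜 => (ε - a) / (ε - b)) 0 := by
    refine ContinuousAt.div (by fun_prop) (by fun_prop) ?_
    rwa [zero_sub, neg_ne_zero]
  have hlim : Tendsto (fun ε : 𝕜 => (ε - a) / (ε - b)) (𝓝[≠] 0) (𝓝 (a / b)) := by
    simpa only [zero_sub, neg_div_neg_eq] using hcont.tendsto.mono_left nhdsWithin_le_nhds
  refine hlim.congr' ?_
  filter_upwards [self_mem_nhdsWithin] with ε (hε : ε ≠ 0)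
  rw [one_sub_div hε, one_sub_div hε, div_div_div_cancel_right₀ hε]

section Pochhammer

variable (q : ℂ)

theorem qp_zero_left (n : ℕ) : qp 0 q n = 1 := by
  simp [qp]

theorem qp_zero_right (a : ℂ) : qp a q 0 = 1 :=
  prod_range_zero _

theorem qp_one_left {n : ℕ} (hn : n ≠ 0) : qp 1 q n = 0 :=
  prod_eq_zero (mem_range.mpr (Nat.pos_of_ne_zero hn)) (by simp)

theorem continuous_qp (n : ℕ) : Continuous fun a => qp a q n := by
  unfold qp
  fun_prop

variable {q}

theorem qp_mul_zpow_one_sub (hq : q ≠ 0) (c : ℂ) (n : ℕ) :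
    qp (c * q ^ (1 - (n : ℤ))) q n = qpD c q n := by
  unfold qp qpD
  rw [← prod_range_reflect]
  refine prod_congr rfl fun i hi => ?_
  have hin : i < n := mem_range.mp hi
  have hexp : 1 - (n : ℤ) + ((n - 1 - i : ℕ) : ℤ) = -(i : ℤ) := by omega
  rw [mul_assoc, ← zpow_natCast, ← zpow_add₀ hq, hexp]

theorem tendsto_qpD_div_div_qpD_div (hq : q ≠ 0) (a : ℂ) {b : ℂ} (hb : b ≠ 0) (n : ℕ) :
    Tendsto (fun ε => qpD (a / ε) q n / qpD (b / ε) q n) (𝓝[≠] 0) (𝓝 ((a / b) ^ n)) := by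
  have hfactor (i : ℕ) :
      Tendsto (fun ε => (1 - a / ε * q ^ (-(i : ℤ))) / (1 - b / ε * q ^ (-(i : ℤ))))
        (𝓝[≠] 0) (𝓝 (a / b)) := by
    have hqi : q ^ (-(i : ℤ)) ≠ 0 := zpow_ne_zero _ hq
    simpa only [div_mul_eq_mul_div, mul_div_mul_right _ _ hqi] using
      tendsto_one_sub_div_div_one_sub_div (a * q ^ (-(i : ℤ))) (mul_ne_zero hb hqi)
  simpa only [qpD, prod_div_distrib, prod_const, card_range, div_pow] using
    tendsto_finsetProd (range n) fun i _ => hfactor i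

end Pochhammer

/-- The one-variable factor that a part of size `m` contributes to `gfun`; the `j`-th part (counted
from `0`) contributes it at `z = q ^ j * ε`. Inverting `ξ` matches the parameters `ξ̄` of `G_ν`. -/
def partFactor {𝕜 : Type*} [Field 𝕜] (ξ s : ℕ → 𝕜) (m : ℕ) (z : 𝕜) : 𝕜 :=
  1 / (1 - s m * (ξ m)⁻¹ * z) *
    ∏ ℓ ∈ range m, ((ξ ℓ)⁻¹ * z - s ℓ) / (1 - s ℓ * (ξ ℓ)⁻¹ * z)

section PartFactor

variable {𝕜 : Type*} [Field 𝕜] (ξ s : ℕ → 𝕜) (m : ℕ)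

theorem partFactor_zero : partFactor ξ s m 0 = ∏ ℓ ∈ range m, -s ℓ := by
  simp [partFactor]

theorem continuousAt_partFactor_zero [TopologicalSpace 𝕜] [IsTopologicalDivisionRing 𝕜] :
    ContinuousAt (partFactor ξ s m) 0 := by
  have hden (c : 𝕜) : 1 - c * 0 ≠ 0 := by simp
  refine ContinuousAt.mul ?_ (tendsto_finsetProd _ fun ℓ _ => ?_)
  · exact ContinuousAt.div (by fun_prop) (by fun_prop) (hden _)
  · exact ContinuousAt.div (by fun_prop) (by fun_prop) (hden _)

end PartFactor

section Specialization

variable (q : ℂ) (ξ s : ℕ → ℂ) {n : ℕ} (ν : Fin n → ℕ)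

theorem tendsto_prod_partFactor :
    Tendsto (fun ε => ∏ j : Fin n, partFactor ξ s (ν j) (q ^ (j : ℕ) * ε)) (𝓝 0)
      (𝓝 (mS s ν)) := by
  refine tendsto_finsetProd _ fun j _ => ?_
  have harg : Tendsto (fun ε => q ^ (j : ℕ) * ε) (𝓝 0) (𝓝 0) :=
    Continuous.tendsto' (by fun_prop) _ _ (mul_zero _)
  rw [← partFactor_zero ξ s (ν j)]
  exact (continuousAt_partFactor_zero ξ s (ν j)).tendsto.comp harg

theorem gfun_eq_zero {k : ℕ} (hk : k ≠ 0) (ε : ℂ) : gfun q ξ s ν k ε = 0 := by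
  simp [gfun, qp_one_left q hk]

variable {q}

theorem gfun_zero_apply (hq : q ≠ 0) (ε : ℂ) :
    gfun q ξ s ν 0 ε =
      (∏ j : Fin n, partFactor ξ s (ν j) (q ^ (j : ℕ) * ε)) * qp (s 0 ^ 2) q n *
        (qpD (ξ 0 / s 0 / ε) q n / qpD (s 0 * ξ 0 / ε) q n) *
          (qp (s 0 * ε / ξ 0) q n / qp (s 0 * ε / ξ 0) q n) := by
  have hreverse : qp (ξ 0 * q ^ (1 + ((0 : ℕ) : ℤ) - (n : ℤ)) / (s 0 * ε)) q n =
      qpD (ξ 0 / s 0 / ε) q n := by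
    rw [← qp_mul_zpow_one_sub hq, div_div, Nat.cast_zero, add_zero, div_mul_eq_mul_div]
  have hall : (univ.filter fun j : Fin n => (j : ℕ) < n - 0) = univ := by simp
  rw [gfun, hall, Nat.sub_zero, hreverse, qp_zero_right, pow_zero, mul_one, mul_one]
  simp only [partFactor]
  ring

variable {ξ s}

theorem tendsto_gfun_zero (hq : q ≠ 0) (hξ : ξ 0 ≠ 0) (hs : s 0 ≠ 0) :
    Tendsto (gfun q ξ s ν 0) (𝓝[≠] 0)
      (𝓝 (mS s ν * qp (s 0 ^ 2) q n * s 0 ^ (-(2 * (n : ℤ))))) := by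
  have hparts := (tendsto_prod_partFactor q ξ s ν).mono_left (nhdsWithin_le_nhds (s := {0}ᶜ))
  have hratio : Tendsto (fun ε => qpD (ξ 0 / s 0 / ε) q n / qpD (s 0 * ξ 0 / ε) q n) (𝓝[≠] 0)
      (𝓝 (s 0 ^ (-(2 * (n : ℤ))))) := by
    have hbase : ξ 0 / s 0 / (s 0 * ξ 0) = s 0 ^ (-2 : ℤ) := by
      rw [zpow_neg, zpow_ofNat]
      field_simp
    have hpow : (ξ 0 / s 0 / (s 0 * ξ 0)) ^ n = s 0 ^ (-(2 * (n : ℤ))) := by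
      rw [hbase, ← zpow_natCast, ← zpow_mul, neg_mul]
    exact hpow ▸ tendsto_qpD_div_div_qpD_div hq (ξ 0 / s 0) (mul_ne_zero hs hξ) n
  have hone : Tendsto (fun ε => qp (s 0 * ε / ξ 0) q n) (𝓝[≠] 0) (𝓝 1) := by
    have hcont : Continuous fun ε => qp (s 0 * ε / ξ 0) q n :=
      (continuous_qp q n).comp (by fun_prop)
    exact (hcont.tendsto' 0 1 (by simp [qp_zero_left])).mono_left nhdsWithin_le_nhds
  have hprod := ((hparts.mul_const (qp (s 0 ^ 2) q n)).mul hratio).mul (hone.div hone one_ne_zero)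
  rw [div_one, mul_one] at hprod
  exact hprod.congr fun ε => (gfun_zero_apply ξ s ν hq ε).symm

end Specialization

theorem statement11_general {q : ℂ} {ξ s : ℕ → ℂ} (hq : q ≠ 0) (hξ : ∀ x, ξ x ≠ 0)
    (hs : s 0 ≠ 0) {n : ℕ} (ν : Fin n → ℕ) :
    Tendsto (gfun q ξ s ν #{i | ν i = 0}) (𝓝[≠] 0)
      (𝓝 (if #{i | ν i = 0} = 0 then
        mS s ν * qp (s 0 ^ 2) q n * s 0 ^ (-(2 * (n : ℤ))) else 0)) ∧
    (1 ≤ #{i | ν i = 0} → ∀ ε : ℂ, ε ≠ 0 → gfun q ξ s ν #{i | ν i = 0} ε = 0) := by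
  refine ⟨?_, fun hk ε _ => gfun_eq_zero q ξ s ν (Nat.one_le_iff_ne_zero.mp hk) ε⟩
  split_ifs with hk
  · rw [hk]
    exact tendsto_gfun_zero ν hq (hξ 0) hs
  · exact tendsto_const_nhds.congr fun ε => (gfun_eq_zero q ξ s ν hk ε).symm

/-- **Evaluation of the specialization `G_ν(ϱ)`**: as `ε → 0` along nonzero values,
`g(ε)` converges to `(−S)^ν (s₀²; q)_n s₀^{−2n}` when `ν` has no zero parts (`k = 0`),
and to `0` otherwise; in the latter case `g` vanishes identically.  In particular the
limit does not depend on the inhomogeneity parameters `ξ`. -/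
theorem statement11 (q : ℂ) (ξ s : ℕ → ℂ) (hq : q ≠ 0) (hξ : ∀ x, ξ x ≠ 0)
    (hs : ∀ x, s x ≠ 0) (n k : ℕ) (ν : Fin n → ℕ) (hν : Antitone ν)
    (hk : (Finset.univ.filter fun i => ν i = 0).card = k) :
    Filter.Tendsto (gfun q ξ s ν k) (nhdsWithin (0 : ℂ) {(0 : ℂ)}ᶜ)
      (nhds (if k = 0 then mS s ν * qp (s 0 ^ 2) q n * s 0 ^ (-(2 * (n : ℤ))) else 0)) ∧
    (1 ≤ k → ∀ ε : ℂ, ε ≠ 0 → gfun q ξ s ν k ε = 0) := by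
  subst hk
  exact statement11_general hq hξ (hs 0) ν

end
end

section
/- Partial symmetrization identity. Let K be a field, q ∈ K, m ≥ 1, 0 ≤ ℓ ≤ m, let ζ_1, …, ζ_m ∈ K be pairwise distinct, and let f_1, …, f_ℓ : K → K be arbitrary functions. Then Σ_{σ ∈ S_m} ∏_{i=1}^{ℓ} f_i(ζ_{σ(i)}) · ∏_{1≤α<β≤m} (ζ_{σ(α)} − q ζ_{σ(β)})/(ζ_{σ(α)} − ζ_{σ(β)}) = [m−ℓ]_q! · Σ_{J = {j₁ < … < j_ℓ} ⊆ {1, …, m}} [ ∏_{j ∈ J, r ∉ J} (ζ_j − q ζ_r)/(ζ_j − ζ_r) · Σ_{σ' ∈ S_ℓ} ∏_{i=1}^{ℓ} f_i(ζ_{j_{σ'(i)}}) · ∏_{1≤α<β≤ℓ} (ζ_{j_{σ'(α)}} − q ζ_{j_{σ'(β)}})/(ζ_{j_{σ'(α)}} − ζ_{j_{σ'(β)}}) ], where [d]_q! := ∏_{t=1}^{d} (1 + q + … + q^{t−1}) is the q-factorial (equal to (q;q)_d/(1−q)^d when q ≠ 1). In particular, for ℓ = 0 this reduces to the symmetrization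 identity Σ_{σ ∈ S_m} ∏_{1≤α<β≤m} (ζ_{σ(α)} − q ζ_{σ(β)})/(ζ_{σ(α)} − ζ_{σ(β)}) = [m]_q!. -/
noncomputable section

open Finset
open scoped Classical

/-- The `q`-factorial `[d]_q! = ∏_{t=1}^{d} (1 + q + … + q^{t−1})`. -/
def qfact {K : Type*} [CommRing K] (q : K) (d : ℕ) : K :=
  ∏ t ∈ Finset.range d, ∑ i ∈ Finset.range (t + 1), q ^ i

/-!
Choose the values `σ(1), σ(2), …` one at a time and attach to each step the product of
`w a r = (ζ_a − qζ_r)/(ζ_a − ζ_r)` over the chosen `a` and the values `r` still unused afterwards.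
For a complete arrangement these products multiply up to the product over all pairs `α < β`.
If `s` is the set of values available at some step, then summing over the choices made there
contributes `∑_{x ∈ s} ∏_{r ∈ s, r ≠ x} w x r = 1 + q + ⋯ + q^{|s|−1}`, whatever was chosen before.
Hence, when only the first `ℓ` values are weighted by the `f_i`, summing out the last `m − ℓ`
choices gives `[m−ℓ]_q!` times a sum over injections `{1, …, ℓ} → {1, …, m}`, and every such
injection is uniquely an increasing one precomposed with a permutation.

For the one-step identity put `c_s(x) = ∏_{r ∈ s, r ≠ x} (x − qr)/(x − r)`. Partial fractions give
`∏_{r ∈ s} (z − qr)/(z − r) = q^{|s|} + (1 − q) z ∑_{x ∈ s} c_s(x)/(z − x)`. Adjoining a point `a`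
to `s` replaces `c_s(x)` by `c_s(x) − (1 − q) a c_s(x)/(a − x)` and adds the partial fraction
expansion at `z = a` as a new summand, so the corrections cancel and the sum grows by `q^{|s|}`.
-/

section SymmetrizingFactor

variable {K : Type*} [Field K]

/-- The factor `(a − qb)/(a − b)` attached to an ordered pair in Hall–Littlewood symmetrization.
It is only meaningful for `a ≠ b`: division by zero makes it `0` on the diagonal. -/
def symmetrizingFactor (q a b : K) : K :=
  (a - q * b) / (a - b)

theorem symmetrizingFactor_eq_one_sub (q : K) {a b : K} (hab : a ≠ b) :
    symmetrizingFactor q a b = 1 - (1 - q) * b / (b - a) := by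
  rw [symmetrizingFactor, ← neg_sub b a]
  have : b - a ≠ 0 := sub_ne_zero.2 hab.symm
  field_simp
  ring

theorem prod_erase_insert_symmetrizingFactor (q : K) {s : Finset K} {a x : K} (ha : a ∉ s)
    (hx : x ∈ s) :
    ∏ r ∈ (insert a s).erase x, symmetrizingFactor q x r =
      (1 - (1 - q) * a / (a - x)) * ∏ r ∈ s.erase x, symmetrizingFactor q x r := by
  have hxa : x ≠ a := ne_of_mem_of_not_mem hx ha
  rw [erase_insert_of_ne hxa.symm, prod_insert (mt mem_of_mem_erase ha),
    symmetrizingFactor_eq_one_sub q hxa]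

theorem prod_symmetrizingFactor_eq_pow_add_sum_div (q : K) (s : Finset K) {z : K} (hz : z ∉ s) :
    ∏ r ∈ s, symmetrizingFactor q z r = q ^ #s + (1 - q) * z *
      ∑ x ∈ s, (∏ r ∈ s.erase x, symmetrizingFactor q x r) / (z - x) := by
  induction s using Finset.induction_on generalizing z with
  | empty => simp
  | insert a s ha ih =>
    obtain ⟨hza, hzs⟩ : z ≠ a ∧ z ∉ s := by simpa using hz
    have hza' : z - a ≠ 0 := sub_ne_zero.2 hza
    have residue_insert : ∀ x ∈ s,
        (∏ r ∈ (insert a s).erase x, symmetrizingFactor q x r) / (z - x) =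
          ((z - q * a) * ((∏ r ∈ s.erase x, symmetrizingFactor q x r) / (z - x)) -
            (1 - q) * a * ((∏ r ∈ s.erase x, symmetrizingFactor q x r) / (a - x))) / (z - a) := by
      intro x hx
      have hax : a - x ≠ 0 := sub_ne_zero.2 (ne_of_mem_of_not_mem hx ha).symm
      have hzx : z - x ≠ 0 := sub_ne_zero.2 (ne_of_mem_of_not_mem hx hzs).symm
      rw [prod_erase_insert_symmetrizingFactor q ha hx]
      field_simp
      ring
    rw [prod_insert ha, sum_insert ha, erase_insert ha, card_insert_of_notMem ha,
      sum_congr rfl residue_insert, ← sum_div, sum_sub_distrib, ← mul_sum, ← mul_sum, ih hzs, ih ha,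
      symmetrizingFactor]
    field_simp
    ring

theorem sum_prod_erase_symmetrizingFactor (q : K) (s : Finset K) :
    ∑ x ∈ s, ∏ r ∈ s.erase x, symmetrizingFactor q x r = ∑ i ∈ range #s, q ^ i := by
  induction s using Finset.induction_on with
  | empty => simp
  | insert a s ha ih =>
    have summand_insert : ∀ x ∈ s,
        ∏ r ∈ (insert a s).erase x, symmetrizingFactor q x r =
          (∏ r ∈ s.erase x, symmetrizingFactor q x r) -
            (1 - q) * a * ((∏ r ∈ s.erase x, symmetrizingFactor q x r) / (a - x)) := by
      intro x hx
      rw [prod_erase_insert_symmetrizingFactor q ha hx]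
      ring
    rw [sum_insert ha, erase_insert ha, card_insert_of_notMem ha, sum_congr rfl summand_insert,
      sum_sub_distrib, ← mul_sum, ih, prod_symmetrizingFactor_eq_pow_add_sum_div q s ha,
      sum_range_succ]
    ring

theorem sum_prod_erase_symmetrizingFactor_comp {X : Type*} [DecidableEq X] (q : K) (ζ : X ↪ K)
    (s : Finset X) :
    ∑ x ∈ s, ∏ r ∈ s.erase x, symmetrizingFactor q (ζ x) (ζ r) = ∑ i ∈ range #s, q ^ i := by
  rw [← card_map ζ, ← sum_prod_erase_symmetrizingFactor q (s.map ζ), sum_map]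
  simp only [← map_erase, prod_map]

end SymmetrizingFactor

section SumOverInjections

variable {X M : Type*} [Fintype X] [AddCommMonoid M] {n : ℕ}

/-- The values that the tuple `κ` does not take. It is a filter rather than the complement of an
image so as to agree definitionally with the index set of `∏_{r ∉ J}` in the main theorem. -/
def omittedValues [DecidableEq X] (κ : Fin n → X) : Finset X :=
  univ.filter fun r => ∀ j, κ j ≠ r

theorem mem_omittedValues [DecidableEq X] {κ : Fin n → X} {x : X} :
    x ∈ omittedValues κ ↔ x ∉ Set.range κ := by
  simp [omittedValues]

theorem card_omittedValues [DecidableEq X] (κ : Fin n ↪ X) :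
    #(omittedValues κ) = Fintype.card X - n := by
  have : omittedValues κ = (univ.map κ)ᶜ := by ext; simp [mem_omittedValues]
  rw [this, card_compl, card_map, card_univ, Fintype.card_fin]

theorem omittedValues_comp_perm [DecidableEq X] (κ : Fin n → X) (σ : Equiv.Perm (Fin n)) :
    omittedValues (κ ∘ σ) = omittedValues κ := by
  ext
  rw [mem_omittedValues, mem_omittedValues, EquivLike.range_comp]

theorem sum_embedding_succ_eq_sum_snoc [DecidableEq X] (G : (Fin (n + 1) → X) → M) :
    ∑ κ : Fin (n + 1) ↪ X, G κ =
      ∑ κ : Fin n ↪ X, ∑ x ∈ omittedValues κ, G (Fin.snoc κ x) := by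
  rw [sum_sigma']
  exact sum_bij' (fun κ _ => ⟨Fin.Embedding.init κ, κ (Fin.last n)⟩)
    (fun p hp => Fin.Embedding.snoc p.1 (mem_omittedValues.1 (mem_sigma.1 hp).2))
    (fun κ _ => mem_sigma.2 ⟨mem_univ _, mem_omittedValues.2 (by
      rintro ⟨i, hi⟩
      exact (Fin.castSucc_lt_last i).ne (κ.injective hi))⟩)
    (fun _ _ => mem_univ _)
    (fun κ _ => DFunLike.coe_injective (Fin.snoc_init_self (κ : Fin (n + 1) → X)))
    (fun p hp => Sigma.ext (Fin.Embedding.init_snoc _ _) (heq_of_eq Fin.Embedding.snoc_last))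
    (fun κ _ => congrArg G (Fin.snoc_init_self (κ : Fin (n + 1) → X)).symm)

theorem sum_embedding_eq_sum_strictMono_perm [LinearOrder X] (G : (Fin n → X) → M) :
    ∑ κ : Fin n ↪ X, G κ =
      ∑ ι : Fin n → X with StrictMono ι, ∑ σ : Equiv.Perm (Fin n), G (ι ∘ σ) := by
  rw [← sum_product']
  symm
  refine sum_bij (fun p hp => p.2.toEmbedding.trans
      ⟨p.1, (mem_filter.1 (mem_product.1 hp).1).2.injective⟩)
    (fun _ _ => mem_univ _) ?_ ?_ fun _ _ => rfl
  · rintro ⟨ι, σ⟩ hι ⟨ι', σ'⟩ hι' h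
    simp only [mem_product, mem_filter, mem_univ, true_and, and_true] at hι hι'
    have hcomp : ι ∘ σ = ι' ∘ σ' := congrArg DFunLike.coe h
    obtain rfl : ι = ι' := (StrictMono.range_inj hι hι').1 <| by
      rw [← EquivLike.range_comp ι σ, hcomp, EquivLike.range_comp]
    exact Prod.ext rfl (Equiv.ext fun i => hι.injective (congrFun hcomp i))
  · intro κ _
    have hsort : StrictMono (κ ∘ Tuple.sort κ) :=
      (Tuple.monotone_sort κ).strictMono_of_injective (κ.injective.comp (Tuple.sort κ).injective)
    exact ⟨(κ ∘ Tuple.sort κ, (Tuple.sort κ)⁻¹), by simpa using hsort, by ext; simp⟩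

end SumOverInjections

section ArrangementWeight

variable {X R : Type*} [Fintype X] [DecidableEq X] [CommSemiring R] {m n : ℕ} (w : X → X → R)

/-- The weight of a tuple whose values are chosen one after the other: choosing `κ α` contributes
the product of `w (κ α) r` over all `r` that have not been chosen up to and including that step. -/
def arrangementWeight (κ : Fin n → X) : R :=
  ∏ α, ∏ r ∈ univ.filter fun r => ∀ β ≤ α, κ β ≠ r, w (κ α) r

theorem arrangementWeight_snoc (κ : Fin n → X) (x : X) :
    arrangementWeight w (Fin.snoc κ x : Fin (n + 1) → X) =
      arrangementWeight w κ * ∏ r ∈ (omittedValues κ).erase x, w x r := by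
  have unchosen_last : (univ.filter fun r =>
      ∀ β ≤ Fin.last n, (Fin.snoc κ x : Fin (n + 1) → X) β ≠ r) = (omittedValues κ).erase x := by
    ext r
    simp [Fin.forall_fin_succ', omittedValues, and_comm, eq_comm, Fin.le_last]
  have unchosen_castSucc (α : Fin n) :
      (univ.filter fun r => ∀ β ≤ α.castSucc, (Fin.snoc κ x : Fin (n + 1) → X) β ≠ r) =
        univ.filter fun r => ∀ β ≤ α, κ β ≠ r := by
    ext r
    simp [Fin.forall_fin_succ']
  simp only [arrangementWeight, Fin.prod_univ_castSucc, Fin.snoc_castSucc, Fin.snoc_last,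
    unchosen_last, unchosen_castSucc]

theorem arrangementWeight_eq_prod_omitted_mul_prod_pairs {κ : Fin n → X}
    (hκ : Function.Injective κ) :
    arrangementWeight w κ =
      (∏ α, ∏ r ∈ omittedValues κ, w (κ α) r) * ∏ α, ∏ β ∈ Ioi α, w (κ α) (κ β) := by
  rw [← prod_mul_distrib]
  refine prod_congr rfl fun α _ => ?_
  have unchosen_eq : (univ.filter fun r => ∀ β ≤ α, κ β ≠ r) =
      omittedValues κ ∪ (Ioi α).map ⟨κ, hκ⟩ := by
    ext r
    simp only [omittedValues, mem_filter, mem_univ, true_and, mem_union, mem_map, mem_Ioi,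
      Function.Embedding.coeFn_mk]
    constructor
    · intro hr
      by_contra! h
      obtain ⟨⟨β, rfl⟩, hlater⟩ := h
      exact hr β (le_of_not_gt fun hβ => hlater β hβ rfl) rfl
    · rintro (hr | ⟨γ, hγ, rfl⟩) β hβ
      · exact hr β
      · exact hκ.ne (hβ.trans_lt hγ).ne
  have disjoint_later : Disjoint (omittedValues κ) ((Ioi α).map ⟨κ, hκ⟩) := by
    refine disjoint_left.2 fun r hr hlater => mem_omittedValues.1 hr ?_
    obtain ⟨β, -, rfl⟩ := mem_map.1 hlater
    exact ⟨β, rfl⟩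
  rw [unchosen_eq, prod_union disjoint_later, prod_map]
  rfl

theorem arrangementWeight_of_bijective {κ : Fin n → X} (hκ : Function.Bijective κ) :
    arrangementWeight w κ = ∏ α, ∏ β ∈ Ioi α, w (κ α) (κ β) := by
  have : omittedValues κ = ∅ := by
    ext
    simp [mem_omittedValues, hκ.surjective.range_eq]
  rw [arrangementWeight_eq_prod_omitted_mul_prod_pairs w hκ.injective, this]
  simp only [prod_empty, prod_const_one, one_mul]

theorem arrangementWeight_comp_perm {ι : Fin n → X} (hι : Function.Injective ι)
    (σ : Equiv.Perm (Fin n)) :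
    arrangementWeight w (ι ∘ σ) =
      (∏ j, ∏ r ∈ omittedValues ι, w (ι j) r) *
        ∏ α, ∏ β ∈ Ioi α, w (ι (σ α)) (ι (σ β)) := by
  rw [arrangementWeight_eq_prod_omitted_mul_prod_pairs w (hι.comp σ.injective),
    omittedValues_comp_perm]
  congr 1
  exact Equiv.prod_comp σ fun j => ∏ r ∈ omittedValues ι, w (ι j) r

variable {w} {c : ℕ → R}

theorem sum_embedding_succ_init_mul_arrangementWeight
    (hw : ∀ s : Finset X, ∑ x ∈ s, ∏ r ∈ s.erase x, w x r = c #s) (H : (Fin n → X) → R) :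
    ∑ κ : Fin (n + 1) ↪ X, H (Fin.init κ) * arrangementWeight w κ =
      c (Fintype.card X - n) * ∑ κ : Fin n ↪ X, H κ * arrangementWeight w κ := by
  rw [sum_embedding_succ_eq_sum_snoc fun κ => H (Fin.init κ) * arrangementWeight w κ, mul_sum]
  refine sum_congr rfl fun κ _ => ?_
  simp only [Fin.init_snoc, arrangementWeight_snoc, ← mul_assoc]
  rw [← mul_sum, hw, card_omittedValues, mul_comm, mul_assoc]

theorem sum_embedding_castLE_mul_arrangementWeight
    (hw : ∀ s : Finset X, ∑ x ∈ s, ∏ r ∈ s.erase x, w x r = c #s) (hX : Fintype.card X = m)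
    (hn : n ≤ m) (H : (Fin n → X) → R) :
    ∑ κ : Fin m ↪ X, H (fun i => κ (Fin.castLE hn i)) * arrangementWeight w κ =
      (∏ t ∈ range (m - n), c (t + 1)) * ∑ κ : Fin n ↪ X, H κ * arrangementWeight w κ := by
  induction hn using Nat.decreasingInduction with
  | self => simp
  | of_succ n hn ih =>
    have hsub : m - n = m - (n + 1) + 1 := by omega
    have hcard : Fintype.card X - n = m - (n + 1) + 1 := by omega
    refine (ih fun κ => H (Fin.init κ)).trans ?_
    rw [sum_embedding_succ_init_mul_arrangementWeight hw, hcard, hsub, prod_range_succ, mul_assoc]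

end ArrangementWeight

theorem statement18_general {R : Type*} [CommSemiring R] {m ℓ : ℕ} {w : Fin m → Fin m → R}
    {c : ℕ → R} (hw : ∀ s : Finset (Fin m), ∑ x ∈ s, ∏ r ∈ s.erase x, w x r = c #s) (hℓ : ℓ ≤ m)
    (H : (Fin ℓ → Fin m) → R) :
    (∑ σ : Equiv.Perm (Fin m),
        H (fun i => σ (Fin.castLE hℓ i)) * ∏ α : Fin m, ∏ β ∈ Ioi α, w (σ α) (σ β)) =
      (∏ t ∈ range (m - ℓ), c (t + 1)) *
        ∑ ι : Fin ℓ → Fin m,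
          if StrictMono ι then
            (∏ j : Fin ℓ, ∏ r ∈ univ.filter fun r : Fin m => ∀ j' : Fin ℓ, ι j' ≠ r, w (ι j) r) *
              ∑ σ' : Equiv.Perm (Fin ℓ),
                H (fun i => ι (σ' i)) * ∏ α : Fin ℓ, ∏ β ∈ Ioi α, w (ι (σ' α)) (ι (σ' β))
          else 0 := by
  rw [← sum_filter]
  calc
    _ = ∑ κ : Fin m ↪ Fin m, H (fun i => κ (Fin.castLE hℓ i)) * arrangementWeight w κ := by
      refine Fintype.sum_equiv (Equiv.embeddingEquivOfFinite _).symm _ _ fun σ => ?_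
      rw [← arrangementWeight_of_bijective w σ.bijective]
      rfl
    _ = (∏ t ∈ range (m - ℓ), c (t + 1)) * ∑ κ : Fin ℓ ↪ Fin m, H κ * arrangementWeight w κ :=
      sum_embedding_castLE_mul_arrangementWeight hw (Fintype.card_fin m) hℓ H
    _ = _ := by
      rw [sum_embedding_eq_sum_strictMono_perm fun κ => H κ * arrangementWeight w κ]
      refine congrArg _ (sum_congr rfl fun ι hι => ?_)
      rw [mul_sum]
      refine sum_congr rfl fun σ' _ => ?_
      rw [arrangementWeight_comp_perm w (mem_filter.1 hι).2.injective, mul_left_comm]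
      rfl

/-- **Partial symmetrization identity**: for pairwise distinct `ζ₁, …, ζ_m` in a field `K`
and arbitrary functions `f₁, …, f_ℓ : K → K` (`ℓ ≤ m`),
`Σ_{σ ∈ S_m} ∏_{i=1}^{ℓ} f_i(ζ_{σ(i)}) ∏_{α<β} (ζ_{σ(α)} − qζ_{σ(β)})/(ζ_{σ(α)} − ζ_{σ(β)})
  = [m−ℓ]_q! · Σ_{J = {j₁<…<j_ℓ}} ∏_{j∈J, r∉J} (ζ_j − qζ_r)/(ζ_j − ζ_r)
     · Σ_{σ' ∈ S_ℓ} ∏_i f_i(ζ_{j_{σ'(i)}}) ∏_{α<β} (ζ_{j_{σ'(α)}} − qζ_{j_{σ'(β)}})/(ζ_{j_{σ'(α)}} − ζ_{j_{σ'(β)}})`. -/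
theorem statement18 {K : Type*} [Field K] (q : K) (m ℓ : ℕ) (hm : 1 ≤ m) (hℓ : ℓ ≤ m)
    (ζ : Fin m → K) (hζ : Function.Injective ζ) (f : Fin ℓ → K → K) :
    (∑ σ : Equiv.Perm (Fin m),
        (∏ i : Fin ℓ, f i (ζ (σ (Fin.castLE hℓ i)))) *
          ∏ α : Fin m, ∏ β ∈ Finset.Ioi α,
            (ζ (σ α) - q * ζ (σ β)) / (ζ (σ α) - ζ (σ β))) =
      qfact q (m - ℓ) *
        ∑ ι : Fin ℓ → Fin m,
          if StrictMono ι then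
            (∏ j : Fin ℓ, ∏ r ∈ Finset.univ.filter fun r : Fin m => ∀ j' : Fin ℓ, ι j' ≠ r,
                (ζ (ι j) - q * ζ r) / (ζ (ι j) - ζ r)) *
              ∑ σ' : Equiv.Perm (Fin ℓ),
                (∏ i : Fin ℓ, f i (ζ (ι (σ' i)))) *
                  ∏ α : Fin ℓ, ∏ β ∈ Finset.Ioi α,
                    (ζ (ι (σ' α)) - q * ζ (ι (σ' β))) / (ζ (ι (σ' α)) - ζ (ι (σ' β)))
          else 0 :=
  statement18_general (c := fun k => ∑ i ∈ range k, q ^ i)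
    (sum_prod_erase_symmetrizingFactor_comp q ⟨ζ, hζ⟩) hℓ fun κ => ∏ i, f i (ζ (κ i))

end
end

section
/- Inversion-summation factorization. Let R be a commutative ring, let (X_i)_{i ≥ 1} be elements of R, let k ≥ 1, and let n₁ ≤ n₂ ≤ … ≤ n_k be positive integers. For a tuple (i₁, …, i_k) define inv_{≤p} := #{ j < p : i_j > i_p }. Then Σ over all tuples (i₁, …, i_k) of pairwise distinct indices with 1 ≤ i_p ≤ n_p for each p, of ∏_{p=1}^{k} X_{i_p + inv_{≤p}}, equals ∏_{p=1}^{k} (X_p + X_{p+1} + … + X_{n_p}), where a factor with n_p < p is the empty sum 0. Equivalently, the map (i₁, …, i_k) ↦ (i₁, i₂ + inv_{≤2}, …, i_k + inv_{≤k}) is a bijection from the set of such pairwise distinct tuples onto the box {(j₁, …, j_k) : p ≤ j_p ≤ n_p for all p}. -/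
noncomputable section

open Finset
open scoped Classical

/-- The inversion count `inv_{≤p}(i) = #{j < p : i_j > i_p}`. -/
def invp {k : ℕ} (i : Fin k → ℕ) (p : Fin k) : ℕ :=
  (Finset.univ.filter fun j : Fin k => j < p ∧ i p < i j).card

/-!
For an injective tuple, the `p`-th entry of the image is `i p` shifted by the number of elements of
`A = {i q | q < p}` exceeding it. When `A ⊆ [l, m]`, this shift is strictly increasing on the
complement of `A` and maps `[l, m] \ A` into `[l + |A|, m]`, an interval of the same size, so each
coordinate is a bijection once the earlier entries are fixed; monotonicity of `n` ensures
`A ⊆ [l, n p]`. A triangular map of this kind is a bijection, inverted one coordinate at a time.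
The sum formula is the expansion of the product over the resulting box.
-/

/-- The shift of `x` by the number of elements of `A` exceeding it. With `A` the set of earlier
entries of a tuple, it is one coordinate of the map in the theorem. -/
def shiftAbove (A : Finset ℕ) (x : ℕ) : ℕ := x + #{a ∈ A | x < a}

theorem strictMonoOn_shiftAbove (A : Finset ℕ) : StrictMonoOn (shiftAbove A) (A : Set ℕ)ᶜ := by
  intro x _ y hy hxy
  have hsub : {a ∈ A | x < a} ⊆ {a ∈ A | y < a} ∪ Ioo x y := by
    intro a ha
    obtain ⟨haA, hxa⟩ := mem_filter.1 ha
    have hay : a ≠ y := fun h => hy (h ▸ haA)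
    rcases hay.lt_or_gt with hlt | hgt
    · exact mem_union_right _ (mem_Ioo.2 ⟨hxa, hlt⟩)
    · exact mem_union_left _ (mem_filter.2 ⟨haA, hgt⟩)
  have hcard := (card_le_card hsub).trans (card_union_le _ _)
  rw [Nat.card_Ioo] at hcard
  unfold shiftAbove
  lia

section Interval

variable {A : Finset ℕ} {l m : ℕ}

theorem shiftAbove_mem_Icc (hA : A ⊆ Icc l m) {x : ℕ} (hx : x ∈ Icc l m \ A) :
    shiftAbove A x ∈ Icc (#A + l) m := by
  obtain ⟨hxm, hxA⟩ := mem_sdiff.1 hx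
  have habove : {a ∈ A | x < a} ⊆ Ioc x m := fun a ha =>
    have ⟨haA, hxa⟩ := mem_filter.1 ha
    mem_Ioc.2 ⟨hxa, (mem_Icc.1 (hA haA)).2⟩
  have hbelow : {a ∈ A | ¬ x < a} ⊆ Ico l x := fun a ha =>
    have ⟨haA, hax⟩ := mem_filter.1 ha
    mem_Ico.2 ⟨(mem_Icc.1 (hA haA)).1, (not_lt.1 hax).lt_of_ne fun h => hxA (h ▸ haA)⟩
  have habove_card := card_le_card habove
  have hbelow_card := card_le_card hbelow
  have hsplit := card_filter_add_card_filter_not (s := A) (x < ·)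
  rw [Nat.card_Ioc] at habove_card
  rw [Nat.card_Ico] at hbelow_card
  rw [mem_Icc] at hxm ⊢
  unfold shiftAbove
  lia

theorem bijOn_shiftAbove (hA : A ⊆ Icc l m) :
    Set.BijOn (shiftAbove A) ↑(Icc l m \ A) ↑(Icc (#A + l) m) := by
  have hmaps : Set.MapsTo (shiftAbove A) ↑(Icc l m \ A) ↑(Icc (#A + l) m) :=
    fun _ => shiftAbove_mem_Icc hA
  have hinj : Set.InjOn (shiftAbove A) ↑(Icc l m \ A) :=
    (strictMonoOn_shiftAbove A).injOn.mono fun _ hx => (mem_sdiff.1 hx).2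
  have hcard : #(Icc (#A + l) m) ≤ #(Icc l m \ A) := by
    rw [card_sdiff_of_subset hA, Nat.card_Icc, Nat.card_Icc]
    lia
  exact ⟨hmaps, hinj, surjOn_of_injOn_of_card_le _ hmaps hinj hcard⟩

end Interval

-- `T p` ignores the coordinates below `p`, so a preimage can be found by recursion on `p`.
theorem bijOn_of_bijOn_domRestrict_Iio {ι : Type*} [Preorder ι] [WellFoundedLT ι]
    {α β : ι → Type*} [∀ p, Nonempty (α p)]
    {S : ∀ p, (∀ q : Set.Iio p, α q) → Set (α p)} {T : ∀ p, Set (β p)}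
    {f : ∀ p, (∀ q : Set.Iio p, α q) → α p → β p}
    (hf : ∀ (a : ∀ p, α p) (p : ι),
      (∀ q < p, a q ∈ S q ((Set.Iio q).domRestrict a)) →
        Set.BijOn (f p ((Set.Iio p).domRestrict a)) (S p ((Set.Iio p).domRestrict a)) (T p)) :
    Set.BijOn (fun (a : ∀ p, α p) p => f p ((Set.Iio p).domRestrict a) (a p))
      {a | ∀ p, a p ∈ S p ((Set.Iio p).domRestrict a)} {b | ∀ p, b p ∈ T p} := by
  refine ⟨fun a ha p => (hf a p fun q _ => ha q).mapsTo (ha p), ?_, ?_⟩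
  · intro a ha a' ha' h
    funext p
    induction p using WellFoundedLT.induction with
    | ind p ih =>
      have hpast : (Set.Iio p).domRestrict a = (Set.Iio p).domRestrict a' :=
        funext fun q => ih q q.2
      have hp := congrFun h p
      have hap := ha p
      simp only [hpast] at hp hap
      exact (hf a' p fun q _ => ha' q).injOn hap (ha' p) hp
  · intro b hb
    let a : ∀ p, α p := wellFounded_lt.fix fun p past =>
      Function.invFunOn (f p fun q => past q q.2) (S p fun q => past q q.2) (b p)
    have ha_eq (p : ι) : a p = Function.invFunOn (f p ((Set.Iio p).domRestrict a))
        (S p ((Set.Iio p).domRestrict a)) (b p) := wellFounded_lt.fix_eq _ p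
    have ha_mem (p : ι) : a p ∈ S p ((Set.Iio p).domRestrict a) := by
      induction p using WellFoundedLT.induction with
      | ind p ih => exact ha_eq p ▸ Function.invFunOn_mem ((hf a p ih).surjOn (hb p))
    refine ⟨a, ha_mem, funext fun p => ?_⟩
    have hpreimage := Function.invFunOn_eq ((hf a p fun q _ => ha_mem q).surjOn (hb p))
    rwa [← ha_eq p] at hpreimage

theorem injOn_iff_forall_notMem_image_Iio {ι α : Type*} [LinearOrder ι]
    [LocallyFiniteOrderBot ι] [DecidableEq α] {i : ι → α} {s : Set ι} (hs : IsLowerSet s) :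
    Set.InjOn i s ↔ ∀ p ∈ s, i p ∉ (Iio p).image i := by
  simp only [mem_image, mem_Iio, not_exists, not_and]
  refine ⟨fun hi p hp q hqp heq => hqp.ne (hi (hs hqp.le hp) hp heq), fun h p hp q hq heq => ?_⟩
  rcases lt_trichotomy p q with hpq | hpq | hqp
  · exact absurd heq (h q hq p hpq)
  · exact hpq
  · exact absurd heq.symm (h p hp q hqp)

section Tuple

variable {k : ℕ} {n : Fin k → ℕ}

theorem add_invp_eq_shiftAbove {i : Fin k → ℕ} {p : Fin k} (hi : Set.InjOn i (Set.Iio p)) :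
    i p + invp i p = shiftAbove ((Iio p).image i) (i p) := by
  unfold invp shiftAbove
  rw [filter_image, card_image_of_injOn (hi.mono fun _ hj => mem_Iio.1 (mem_filter.1 hj).1)]
  congr 2
  ext j
  simp only [mem_filter, mem_univ, true_and, mem_Iio]

theorem bijOn_shiftAbove_image_Iio (l : ℕ) (hn : Monotone n) :
    Set.BijOn (fun (i : Fin k → ℕ) (p : Fin k) => shiftAbove ((Iio p).image i) (i p))
      {i | ∀ p, i p ∈ Icc l (n p) \ (Iio p).image i} {j | ∀ p, j p ∈ Icc (p.val + l) (n p)} := by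
  have himage (i : Fin k → ℕ) (p : Fin k) :
      univ.image ((Set.Iio p).domRestrict i) = (Iio p).image i := by
    ext x
    simp
  have hbij := bijOn_of_bijOn_domRestrict_Iio
    (f := fun p past => shiftAbove (univ.image past))
    (S := fun p past => ↑(Icc l (n p) \ univ.image past))
    (T := fun p => ↑(Icc (p.val + l) (n p))) ?_
  · simpa only [himage, mem_coe] using hbij
  intro i p hi
  simp only [himage, mem_coe] at hi ⊢
  have hsub : (Iio p).image i ⊆ Icc l (n p) := image_subset_iff.2 fun q hq =>
    have hqp := mem_Iio.1 hq
    Icc_subset_Icc_right (hn hqp.le) (mem_sdiff.1 (hi q hqp)).1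
  have hcard : #((Iio p).image i) = p := by
    have hinj : Set.InjOn i (Set.Iio p) := (injOn_iff_forall_notMem_image_Iio (isLowerSet_Iio p)).2
      fun q hq => (mem_sdiff.1 (hi q hq)).2
    rw [← coe_Iio] at hinj
    rw [card_image_of_injOn hinj, Fin.card_Iio]
  simpa only [hcard] using bijOn_shiftAbove hsub

theorem bijOn_add_invp (l : ℕ) (hn : Monotone n) :
    Set.BijOn (fun (i : Fin k → ℕ) (p : Fin k) => i p + invp i p)
      {i | Function.Injective i ∧ ∀ p, l ≤ i p ∧ i p ≤ n p}
      {j | ∀ p, p.val + l ≤ j p ∧ j p ≤ n p} := by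
  have hsource : {i | ∀ p, i p ∈ Icc l (n p) \ (Iio p).image i} =
      {i | Function.Injective i ∧ ∀ p, l ≤ i p ∧ i p ≤ n p} := by
    ext i
    rw [Set.mem_ofPred_eq, Set.mem_ofPred_eq, ← Set.injOn_univ,
      injOn_iff_forall_notMem_image_Iio isLowerSet_univ]
    simp only [mem_sdiff, mem_Icc, forall_and, Set.mem_univ, true_imp_iff]
    exact and_comm
  have hbij := bijOn_shiftAbove_image_Iio l hn
  simp only [hsource, mem_Icc] at hbij
  exact hbij.congr fun i hi => funext fun p => (add_invp_eq_shiftAbove hi.1.injOn).symm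

end Tuple

theorem statement19_general {R : Type*} [CommSemiring R] (X : ℕ → R) (k l : ℕ)
    (n : Fin k → ℕ) (hmono : Monotone n) :
    ((∑ i ∈ Fintype.piFinset fun p : Fin k => Finset.Icc l (n p),
        if Function.Injective i then ∏ p : Fin k, X (i p + invp i p) else 0) =
      ∏ p : Fin k, ∑ j ∈ Finset.Icc (p.val + l) (n p), X j) ∧
    Set.BijOn (fun (i : Fin k → ℕ) (p : Fin k) => i p + invp i p)
      {i : Fin k → ℕ | Function.Injective i ∧ ∀ p : Fin k, l ≤ i p ∧ i p ≤ n p}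
      {j : Fin k → ℕ | ∀ p : Fin k, p.val + l ≤ j p ∧ j p ≤ n p} := by
  have hbij := bijOn_add_invp l hmono
  refine ⟨?_, hbij⟩
  have hsource : {i | Function.Injective i ∧ ∀ p, l ≤ i p ∧ i p ≤ n p} =
      ↑{i ∈ Fintype.piFinset fun p => Icc l (n p) | Function.Injective i} := by
    ext i
    simp [and_comm]
  have htarget : {j : Fin k → ℕ | ∀ p, p.val + l ≤ j p ∧ j p ≤ n p} =
      ↑(Fintype.piFinset fun p : Fin k => Icc (p.val + l) (n p)) := by
    ext j
    simp [Pi.le_def, forall_and]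
  rw [hsource, htarget] at hbij
  rw [← sum_filter, prod_univ_sum]
  exact sum_nbij _ hbij.mapsTo hbij.injOn hbij.surjOn fun _ _ => rfl

/-- **Inversion-summation factorization**: for elements `X₁, X₂, …` of a commutative ring
and positive integers `n₁ ≤ … ≤ n_k`,
`Σ_{(i₁,…,i_k) pairwise distinct, 1 ≤ i_p ≤ n_p} ∏_p X_{i_p + inv_{≤p}}
  = ∏_p (X_p + X_{p+1} + … + X_{n_p})`;
equivalently, `(i₁,…,i_k) ↦ (i₁, i₂ + inv_{≤2}, …, i_k + inv_{≤k})` is a bijection from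
the set of such pairwise distinct tuples onto the box `{(j₁,…,j_k) : p ≤ j_p ≤ n_p}`
(all indices being `1`-based). -/
theorem statement19 {R : Type*} [CommRing R] (X : ℕ → R) (k : ℕ) (hk : 1 ≤ k)
    (n : Fin k → ℕ) (hmono : Monotone n) (hpos : ∀ p, 1 ≤ n p) :
    ((∑ i ∈ Fintype.piFinset fun p : Fin k => Finset.Icc 1 (n p),
        if Function.Injective i then ∏ p : Fin k, X (i p + invp i p) else 0) =
      ∏ p : Fin k, ∑ j ∈ Finset.Icc (p.val + 1) (n p), X j) ∧
    Set.BijOn (fun (i : Fin k → ℕ) (p : Fin k) => i p + invp i p)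
      {i : Fin k → ℕ | Function.Injective i ∧ ∀ p : Fin k, 1 ≤ i p ∧ i p ≤ n p}
      {j : Fin k → ℕ | ∀ p : Fin k, p.val + 1 ≤ j p ∧ j p ≤ n p} :=
  statement19_general X k 1 n hmono

end
end
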